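/- Let (V,E,Ψ) be a strongly connected planar box-like self-affine GIFS, (p_e)_{e∈E} positive weights with ∑_{e:i(e)=v} p_e=1 for every v, and (μ_v)_{v∈V} the associated graph-directed box-like self-affine measure family. Then for every q≥0 and every v∈V the L^q-spectra τ_{μ_v^x}(q) and τ_{μ_v^y}(q) exist (upper and lower L^q-spectra coincide). Moreover, the family {μ_v^x, μ_v^y}_{v∈V} can be divided into two disjoint families A and B with #A=#B=#V such that there exist functions τ_A, τ_B on [0,∞) with τ_ν(q)=τ_A(q) for all ν∈A and τ_ν(q)=τ_B(q) for all ν∈B for every q≥0, and for every v∈V either (μ_v^x∈A and μ_v^y∈B) or (μ_v^x∈B and μ_v^y∈A). In particular, if every T_e is diagonal one may take A={μ_v^x}_{v∈V} and B={μ_v^y}_{v∈V}. -/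

import Mathlib

open MeasureTheory Filter Set
open scoped Classical

noncomputable section

namespace LqGIFS

/-! ### Mesh cubes, moment sums, L^q spectra, box dimension -/

/-- Closed cube of the `δ`-mesh of `ℝ`. -/
def meshCube1 (δ : ℝ) (k : ℤ) : Set ℝ := Set.Icc ((k : ℝ) * δ) (((k : ℝ) + 1) * δ)

/-- Closed cube of the `δ`-mesh of `ℝ²`. -/
def meshCube2 (δ : ℝ) (k : ℤ × ℤ) : Set (ℝ × ℝ) :=
  (Set.Icc ((k.1 : ℝ) * δ) (((k.1 : ℝ) + 1) * δ)) ×ˢ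
    (Set.Icc ((k.2 : ℝ) * δ) (((k.2 : ℝ) + 1) * δ))

/-- The moment sum `D_δ^q(ν)` for a measure on `ℝ` (cubes of zero measure are omitted,
so that at `q = 0` this counts the mesh cubes of positive measure). -/
def Dq1 (ν : Measure ℝ) (δ q : ℝ) : ℝ :=
  ∑' k : ℤ, if ν (meshCube1 δ k) = 0 then 0 else (ν (meshCube1 δ k)).toReal ^ q

/-- The moment sum `D_δ^q(ν)` for a measure on `ℝ²`. -/
def Dq2 (ν : Measure (ℝ × ℝ)) (δ q : ℝ) : ℝ :=
  ∑' k : ℤ × ℤ, if ν (meshCube2 δ k) = 0 then 0 else (ν (meshCube2 δ k)).toReal ^ q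

/-- The `L^q`-spectrum of a measure on `ℝ` exists and equals `s` (i.e. upper and lower
`L^q`-spectra coincide and equal `s`). -/
def HasLq1 (ν : Measure ℝ) (q s : ℝ) : Prop :=
  Tendsto (fun δ : ℝ => Real.log (Dq1 ν δ q) / (-Real.log δ))
    (nhdsWithin 0 (Set.Ioi 0)) (nhds s)

/-- The `L^q`-spectrum of a measure on `ℝ²` exists and equals `s`. -/
def HasLq2 (ν : Measure (ℝ × ℝ)) (q s : ℝ) : Prop :=
  Tendsto (fun δ : ℝ => Real.log (Dq2 ν δ q) / (-Real.log δ))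
    (nhdsWithin 0 (Set.Ioi 0)) (nhds s)

/-- Number of closed `δ`-mesh cubes of `ℝ²` meeting `X`. -/
def boxCount (X : Set (ℝ × ℝ)) (δ : ℝ) : ℕ :=
  Set.ncard {k : ℤ × ℤ | (X ∩ meshCube2 δ k).Nonempty}

/-- The box dimension of `X` exists and equals `d`. -/
def HasBoxDim (X : Set (ℝ × ℝ)) (d : ℝ) : Prop :=
  Tendsto (fun δ : ℝ => Real.log (boxCount X δ) / (-Real.log δ))
    (nhdsWithin 0 (Set.Ioi 0)) (nhds d)

/-! ### Matrices: 1-norm, spectral radius, permutation matrices -/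

/-- The 1-norm `‖A‖ = ∑_{i,j} |a_{ij}|` of a square matrix. -/
def mnorm {ι : Type*} [Fintype ι] (A : Matrix ι ι ℝ) : ℝ := ∑ i, ∑ j, |A i j|

/-- The spectral radius of a square real matrix, via the Gelfand formula. -/
def specRad {ι : Type*} [Fintype ι] [DecidableEq ι] (A : Matrix ι ι ℝ) : ℝ :=
  Filter.limsup (fun k : ℕ => (mnorm (A ^ k)) ^ ((k : ℝ)⁻¹)) Filter.atTop

/-- A square 0-1 matrix with exactly one 1 in each row and each column. -/
def IsPermMatrix {ι : Type*} (Z : Matrix ι ι ℝ) : Prop :=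
  (∀ i j, Z i j = 0 ∨ Z i j = 1) ∧ (∀ i, ∃! j, Z i j = 1) ∧ (∀ j, ∃! i, Z i j = 1)

/-! ### Directed graphs -/

/-- Strong connectivity of the finite directed graph with edge set `E`,
initial vertex map `ini` and terminal vertex map `ter`. -/
def GraphSC {V E : Type*} (ini ter : E → V) : Prop :=
  ∀ v v' : V, Relation.TransGen (fun u u' : V => ∃ e, ini e = u ∧ ter e = u') v v'

/-- The matrix `F^{(q)}_{x,y}` with entry `p_{e'}^q a_{e'}^x b_{e'}^y` at `(e,e')` when
`t(e) = i(e')`, and `0` otherwise. -/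
def FmatG {V E : Type*} (ini ter : E → V) (p a b : E → ℝ) (q x y : ℝ) :
    Matrix E E ℝ :=
  fun e e' => if ter e = ini e' then p e' ^ q * a e' ^ x * b e' ^ y else 0

/-- `f` is the entrywise product of the normalized left and right Perron vectors of the
irreducible matrix `F^{(q)}_{x,y(x)}` (spectral radius 1). -/
def IsPerronData {V E : Type*} [Fintype E] [DecidableEq E] (ini ter : E → V)
    (p a b : E → ℝ) (q x yx : ℝ) (f : E → ℝ) : Prop :=
  specRad (FmatG ini ter p a b q x yx) = 1 ∧
  ∃ u v : E → ℝ, (∀ e, 0 < u e) ∧ (∀ e, 0 < v e) ∧ (∑ e, u e) = 1 ∧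
    (FmatG ini ter p a b q x yx).mulVec u = u ∧
    (FmatG ini ter p a b q x yx).vecMul v = v ∧
    (∑ e, v e * u e) = 1 ∧ (∀ e, f e = v e * u e)

/-! ### Planar box-like graph-directed self-affine systems -/

/-- A planar box-like self-affine GIFS: a finite directed graph together with, for each
edge `e`, a contraction `ψ_e(z) = T_e z + t_e` whose linear part is the diagonal matrix
`diag(±a_e, ±b_e)` (when `diag e = true`) or the anti-diagonal matrix with entries
`±a_e` (top right) and `±b_e` (bottom left) (when `diag e = false`), `0 < a_e, b_e < 1`. -/
structure BoxLikeGIFS (V E : Type*) where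
  init : E → V
  term : E → V
  a : E → ℝ
  b : E → ℝ
  sa : E → ℝ
  sb : E → ℝ
  diag : E → Bool
  trans : E → ℝ × ℝ
  a_mem : ∀ e, a e ∈ Set.Ioo (0 : ℝ) 1
  b_mem : ∀ e, b e ∈ Set.Ioo (0 : ℝ) 1
  sa_mem : ∀ e, sa e = 1 ∨ sa e = -1
  sb_mem : ∀ e, sb e = 1 ∨ sb e = -1
  edge_exists : ∀ v, ∃ e, init e = v

namespace BoxLikeGIFS

variable {V E : Type*}

/-- The contraction `ψ_e`. -/
def map (S : BoxLikeGIFS V E) (e : E) : ℝ × ℝ → ℝ × ℝ := fun z =>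
  if S.diag e then
    (S.sa e * S.a e * z.1 + (S.trans e).1, S.sb e * S.b e * z.2 + (S.trans e).2)
  else
    (S.sa e * S.a e * z.2 + (S.trans e).1, S.sb e * S.b e * z.1 + (S.trans e).2)

def StronglyConnected (S : BoxLikeGIFS V E) : Prop := GraphSC S.init S.term

/-- The open unit square `(0,1)²`. -/
def unitSq : Set (ℝ × ℝ) := Set.Ioo (0 : ℝ) 1 ×ˢ Set.Ioo (0 : ℝ) 1

/-- The rectangular open set condition. -/
def ROSC (S : BoxLikeGIFS V E) : Prop :=
  (∀ e : E, S.map e '' unitSq ⊆ unitSq) ∧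
  ∀ e e' : E, e ≠ e' → S.init e = S.init e' →
    Disjoint (S.map e '' unitSq) (S.map e' '' unitSq)

/-- Positive weights summing to one at each vertex. -/
def IsWeights [Fintype E] (S : BoxLikeGIFS V E) (p : E → ℝ) : Prop :=
  (∀ e, 0 < p e) ∧ ∀ v : V, (∑ e : E, if S.init e = v then p e else 0) = 1

/-- `μ` is the associated graph-directed box-like self-affine measure family. -/
def IsGDMeasure [Fintype E] (S : BoxLikeGIFS V E) (p : E → ℝ)
    (μ : V → Measure (ℝ × ℝ)) : Prop :=
  (∀ v, IsProbabilityMeasure (μ v)) ∧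
  ∀ v : V, μ v =
    ∑ e : E, if S.init e = v then
      ENNReal.ofReal (p e) • ((μ (S.term e)).map (S.map e)) else (0 : Measure (ℝ × ℝ))

/-- `X` is the associated graph-directed self-affine carpet family. -/
def IsGDAttractor (S : BoxLikeGIFS V E) (X : V → Set (ℝ × ℝ)) : Prop :=
  (∀ v, (X v).Nonempty ∧ IsCompact (X v)) ∧
  ∀ v : V, X v = ⋃ e : E, ⋃ _ : S.init e = v, S.map e '' X (S.term e)

/-- The matrix `F^{(q)}_{x,y}` of the system. -/
def Fmat (S : BoxLikeGIFS V E) (p : E → ℝ) (q x y : ℝ) : Matrix E E ℝ :=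
  FmatG S.init S.term p S.a S.b q x y

/-- The `(2#E) × (2#E)` block matrix `𝒢^{(q)}_{x,y}`, indexed by `E × Bool`
(`false` = first index of the block, `true` = second). -/
def Gmat (S : BoxLikeGIFS V E) (p : E → ℝ) (τx τy : V → ℝ) (q x y : ℝ) :
    Matrix (E × Bool) (E × Bool) ℝ := fun i j =>
  if S.term i.1 = S.init j.1 then
    if S.diag j.1 then
      if i.2 = false ∧ j.2 = false then
        p j.1 ^ q * S.a j.1 ^ (x + τx (S.term j.1)) * S.b j.1 ^ (y - τx (S.term j.1))
      else if i.2 = true ∧ j.2 = true then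
        p j.1 ^ q * S.b j.1 ^ (x + τy (S.term j.1)) * S.a j.1 ^ (y - τy (S.term j.1))
      else 0
    else
      if i.2 = false ∧ j.2 = true then
        p j.1 ^ q * S.a j.1 ^ (x + τy (S.term j.1)) * S.b j.1 ^ (y - τy (S.term j.1))
      else if i.2 = true ∧ j.2 = false then
        p j.1 ^ q * S.b j.1 ^ (x + τx (S.term j.1)) * S.a j.1 ^ (y - τx (S.term j.1))
      else 0
  else 0

/-! ### Words -/

/-- An admissible word: consecutive edges are composable. -/
def Admissible (S : BoxLikeGIFS V E) (w : List E) : Prop :=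
  List.Chain' (fun e e' => S.term e = S.init e') w

/-- `(c_w, d_w)`: width and height of the rectangle `ψ_w([0,1]²)`. -/
def wdims (S : BoxLikeGIFS V E) : List E → ℝ × ℝ
  | [] => (1, 1)
  | e :: w =>
      if S.diag e then (S.a e * (wdims S w).1, S.b e * (wdims S w).2)
      else (S.a e * (wdims S w).2, S.b e * (wdims S w).1)

/-- Whether `T_w` is diagonal (`true`) or anti-diagonal (`false`). -/
def wordDiag (S : BoxLikeGIFS V E) : List E → Bool
  | [] => true
  | e :: w => S.diag e == wordDiag S w

/-- The larger singular value `α₁(w) = max(c_w, d_w)` of `T_w`. -/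
def alpha1 (S : BoxLikeGIFS V E) (w : List E) : ℝ := max (S.wdims w).1 (S.wdims w).2

/-- The smaller singular value `α₂(w) = min(c_w, d_w)` of `T_w`. -/
def alpha2 (S : BoxLikeGIFS V E) (w : List E) : ℝ := min (S.wdims w).1 (S.wdims w).2

/-- Initial vertex of a (nonempty) word. -/
def wordInit [Nonempty V] (S : BoxLikeGIFS V E) (w : List E) : V :=
  (w.head?.map S.init).getD (Classical.arbitrary V)

/-- Terminal vertex of a (nonempty) word. -/
def wordTerm [Nonempty V] (S : BoxLikeGIFS V E) (w : List E) : V :=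
  (w.getLast?.map S.term).getD (Classical.arbitrary V)

/-- `p_w = p_{w_1} ⋯ p_{w_k}`. -/
def wordProb (p : E → ℝ) (w : List E) : ℝ := (w.map p).prod

/-- `τ_w(q)`: given the values `τx v`, `τy v` of the `L^q`-spectra of the two coordinate
projections of `μ_v`, this is the `L^q`-spectrum of the projection of `μ_{t(w)} ∘ ψ_w⁻¹`
onto the longest side of `ψ_w([0,1]²)`, i.e. `τx (t w)` if `π_w = π_x` and `τy (t w)`
otherwise. -/
def wordTau [Nonempty V] (S : BoxLikeGIFS V E) (τx τy : V → ℝ) (w : List E) : ℝ :=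
  if ((S.wdims w).2 ≤ (S.wdims w).1 ↔ S.wordDiag w = true) then τx (S.wordTerm w)
  else τy (S.wordTerm w)

/-- The modified singular value function
`φ^{s,q}(w) = p_w^q α₁(w)^{τ_w(q)} α₂(w)^{s - τ_w(q)}`. -/
def msvf [Nonempty V] (S : BoxLikeGIFS V E) (p : E → ℝ) (τx τy : V → ℝ)
    (s q : ℝ) (w : List E) : ℝ :=
  wordProb p w ^ q * S.alpha1 w ^ (S.wordTau τx τy w) *
    S.alpha2 w ^ (s - S.wordTau τx τy w)

/-- The modified singular value function matrix `A_k^{s,q}`. -/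
def Amat [Nonempty V] [Fintype E] (S : BoxLikeGIFS V E) (p : E → ℝ) (τx τy : V → ℝ)
    (s q : ℝ) (k : ℕ) : Matrix V V ℝ := fun v v' =>
  ∑ f : Fin k → E,
    if S.Admissible (List.ofFn f) ∧ S.wordInit (List.ofFn f) = v ∧
        S.wordTerm (List.ofFn f) = v'
    then S.msvf p τx τy s q (List.ofFn f) else 0

/-- The family `E^*_δ` of admissible words whose shortest side drops below `δ`
exactly at the last letter. -/
def EstarDelta (S : BoxLikeGIFS V E) (δ : ℝ) : Set (List E) :=
  {w | w ≠ [] ∧ S.Admissible w ∧ S.alpha2 w < δ ∧ δ ≤ S.alpha2 w.dropLast}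

end BoxLikeGIFS

/-! ### Partition of the projections, for the splitting proposition -/

/-- The projection family: `(v, false) ↦ μ_v^x` and `(v, true) ↦ μ_v^y`. -/
def projMeas {V : Type*} (μ : V → Measure (ℝ × ℝ)) (i : V × Bool) : Measure ℝ :=
  if i.2 then (μ i.1).map Prod.snd else (μ i.1).map Prod.fst

/-- `A`, `B` is a partition of the projection family `{μ_v^x, μ_v^y}_v` into two disjoint
families of cardinality `#V`, on each of which the `L^q`-spectra exist and share a common
value, and which splits `{μ_v^x, μ_v^y}` for each `v`. -/
def GoodPartition {V : Type*} [Fintype V] (μ : V → Measure (ℝ × ℝ))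
    (A B : Finset (V × Bool)) : Prop :=
  Disjoint A B ∧ A ∪ B = Finset.univ ∧
  A.card = Fintype.card V ∧ B.card = Fintype.card V ∧
  ∃ τA τB : ℝ → ℝ,
    (∀ q : ℝ, 0 ≤ q → ∀ i ∈ A, HasLq1 (projMeas μ i) q (τA q)) ∧
    (∀ q : ℝ, 0 ≤ q → ∀ i ∈ B, HasLq1 (projMeas μ i) q (τB q)) ∧
    ∀ v : V, ((v, false) ∈ A ∧ (v, true) ∈ B) ∨ ((v, false) ∈ B ∧ (v, true) ∈ A)

end LqGIFS

end

open LqGIFS MeasureTheory Filter Set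

namespace LqGIFS

open Metric
open scoped ENNReal Topology

/-! ### Powers with the convention that `0` has power `0` -/

/-- `x ^ q`, except that `0` is sent to `0` also when `q = 0`. -/
noncomputable def powPos (q : ℝ) (x : ℝ≥0∞) : ℝ≥0∞ := if x = 0 then 0 else x ^ q

@[simp]
lemma powPos_zero (q : ℝ) : powPos q 0 = 0 := by simp [powPos]

@[simp]
lemma powPos_one (q : ℝ) : powPos q 1 = 1 := by simp [powPos]

lemma powPos_of_pos {q : ℝ} (hq : 0 < q) (x : ℝ≥0∞) : powPos q x = x ^ q := by
  unfold powPos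
  split_ifs with h
  · simp [h, hq]
  · rfl

lemma powPos_mono {q : ℝ} (hq : 0 ≤ q) : Monotone (powPos q) := by
  intro x y h
  unfold powPos
  split_ifs with hx hy
  · exact le_rfl
  · exact zero_le
  · exact absurd (le_antisymm (h.trans_eq ‹_›) zero_le) hx
  · exact ENNReal.rpow_le_rpow h hq

lemma measurable_powPos (q : ℝ) : Measurable (powPos q) :=
  Measurable.ite (measurableSet_singleton 0) measurable_const (by fun_prop)

lemma powPos_mul {q : ℝ} (hq : 0 ≤ q) {c : ℝ≥0∞} (hc : c ≠ 0) (x : ℝ≥0∞) :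
    powPos q (c * x) = c ^ q * powPos q x := by
  by_cases hx : x = 0
  · simp [hx]
  · simp [powPos, hc, hx, ENNReal.mul_rpow_of_nonneg _ _ hq]

lemma powPos_ne_top {q : ℝ} (hq : 0 ≤ q) {x : ℝ≥0∞} (hx : x ≠ ∞) : powPos q x ≠ ∞ := by
  unfold powPos
  split_ifs
  · simp
  · exact ENNReal.rpow_ne_top_of_nonneg hq hx

lemma powPos_add_le {q : ℝ} (hq : 0 ≤ q) (x y : ℝ≥0∞) :
    powPos q (x + y) ≤ 2 ^ q * (powPos q x + powPos q y) := by
  have key : ∀ x y : ℝ≥0∞, x ≤ y → powPos q (x + y) ≤ 2 ^ q * (powPos q x + powPos q y) := by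
    intro x y h
    calc powPos q (x + y) ≤ powPos q (2 * y) := powPos_mono hq (by rw [two_mul]; gcongr)
      _ = 2 ^ q * powPos q y := powPos_mul hq (by simp) y
      _ ≤ _ := by gcongr; exact le_add_self
  rcases le_total x y with h | h
  · exact key x y h
  · rw [add_comm x, add_comm (powPos q x)]; exact key y x h

/-- The factor `P ^ (q - 1)`, set to `0` for `P = 0`. -/
noncomputable def jensenWeight (q : ℝ) (P : ℝ≥0∞) : ℝ≥0∞ := if P = 0 then 0 else P ^ (q - 1)

lemma jensenWeight_mul_self (q : ℝ) {P : ℝ≥0∞} (hP : P ≠ ∞) :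
    jensenWeight q P * P = powPos q P := by
  unfold jensenWeight powPos
  split_ifs with h
  · simp
  · conv_lhs => rw [← ENNReal.rpow_one P, ← ENNReal.rpow_mul, one_mul]
    rw [← ENNReal.rpow_add _ _ h hP]; simp

/-- Jensen's inequality for `x ↦ x ^ q` with `1 ≤ q` and unnormalised weights. -/
lemma powPos_sum_le {ι : Type*} (s : Finset ι) {q : ℝ} (hq : 1 ≤ q) (w x : ι → ℝ≥0∞) :
    powPos q (∑ i ∈ s, w i * x i) ≤
      jensenWeight q (∑ i ∈ s, w i) * ∑ i ∈ s, w i * powPos q (x i) := by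
  have hq0 : 0 < q := by linarith
  by_cases hP : ∑ i ∈ s, w i = 0
  · have h0 : ∀ i ∈ s, w i = 0 := by simpa using hP
    have : ∑ i ∈ s, w i * x i = 0 := Finset.sum_eq_zero fun i hi => by simp [h0 i hi]
    simp [this]
  · simp only [powPos_of_pos hq0, jensenWeight, if_neg hP]
    have h := ENNReal.rpow_le_rpow (ENNReal.inner_le_weight_mul_Lp_of_nonneg s hq w x) hq0.le
    refine h.trans_eq ?_
    rw [ENNReal.mul_rpow_of_nonneg _ _ hq0.le, ← ENNReal.rpow_mul, ← ENNReal.rpow_mul,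
      inv_mul_cancel₀ hq0.ne', ENNReal.rpow_one, sub_mul, inv_mul_cancel₀ hq0.ne', one_mul]

/-- Jensen's inequality for `x ↦ x ^ q` with `0 ≤ q ≤ 1` and unnormalised weights. -/
lemma le_powPos_sum {ι : Type*} (s : Finset ι) {q : ℝ} (hq0 : 0 ≤ q) (hq : q ≤ 1)
    (w x : ι → ℝ≥0∞) (hw : ∑ i ∈ s, w i ≠ ∞) :
    jensenWeight q (∑ i ∈ s, w i) * ∑ i ∈ s, w i * powPos q (x i) ≤
      powPos q (∑ i ∈ s, w i * x i) := by
  by_cases hP : ∑ i ∈ s, w i = 0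
  · simp [jensenWeight, hP]
  suffices h : ∑ i ∈ s, w i * powPos q (x i) ≤
      (∑ i ∈ s, w i) ^ (1 - q) * powPos q (∑ i ∈ s, w i * x i) by
    rw [jensenWeight, if_neg hP]
    calc _ ≤ (∑ i ∈ s, w i) ^ (q - 1) *
          ((∑ i ∈ s, w i) ^ (1 - q) * powPos q (∑ i ∈ s, w i * x i)) := by gcongr
      _ = _ := by
        rw [← mul_assoc, ← ENNReal.rpow_add _ _ hP hw]; simp
  rcases hq0.eq_or_lt with rfl | hq0
  · by_cases h0 : ∑ i ∈ s, w i * x i = 0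
    · have h0' : ∀ i ∈ s, w i = 0 ∨ x i = 0 := by simpa using h0
      refine (Finset.sum_eq_zero fun i hi => ?_).trans_le zero_le
      rcases h0' i hi with h | h <;> simp [h]
    · simp only [powPos, if_neg h0, ENNReal.rpow_zero, sub_zero, ENNReal.rpow_one, mul_one]
      refine Finset.sum_le_sum fun i _ => ?_
      split_ifs <;> simp
  · simp only [powPos_of_pos hq0]
    have h := ENNReal.inner_le_weight_mul_Lp_of_nonneg s (one_le_inv_iff₀.2 ⟨hq0, hq⟩) w
      (fun i => x i ^ q)
    simpa only [inv_inv, ← ENNReal.rpow_mul, mul_inv_cancel₀ hq0.ne', ENNReal.rpow_one] using h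

/-! ### Ball moments of a measure on the line -/

/-- The continuous moment `∫ ν(B(x, δ)) ^ q dx`. -/
noncomputable def ballMoment (ν : Measure ℝ) (q δ : ℝ) : ℝ≥0∞ :=
  ∫⁻ x, powPos q (ν (closedBall x δ))

lemma measurable_measure_closedBall (ν : Measure ℝ) [IsFiniteMeasure ν] (δ : ℝ) :
    Measurable fun x => ν (closedBall x δ) := by
  have h : MeasurableSet {z : ℝ × ℝ | dist z.2 z.1 ≤ δ} :=
    measurableSet_le (by fun_prop) (by fun_prop)
  exact measurable_measure_prodMk_left h

lemma measurable_powPos_closedBall (ν : Measure ℝ) [IsFiniteMeasure ν] (q δ : ℝ) :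
    Measurable fun x => powPos q (ν (closedBall x δ)) :=
  (measurable_powPos q).comp (measurable_measure_closedBall ν δ)

lemma ballMoment_mono (ν : Measure ℝ) {q : ℝ} (hq : 0 ≤ q) : Monotone (ballMoment ν q) :=
  fun _ _ h => lintegral_mono fun _ => powPos_mono hq (measure_mono (closedBall_subset_closedBall h))

lemma ballMoment_two_mul_le (ν : Measure ℝ) [IsFiniteMeasure ν] {q : ℝ} (hq : 0 ≤ q) (δ : ℝ) :
    ballMoment ν q (2 * δ) ≤ (2 ^ q * 2) * ballMoment ν q δ := by
  have hsub : ∀ x : ℝ, closedBall x (2 * δ) ⊆ closedBall (x + -δ) δ ∪ closedBall (x + δ) δ := by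
    intro x y hy
    simp only [mem_union, mem_closedBall, Real.dist_eq, abs_le] at hy ⊢
    rcases le_total y x with h | h
    · left; constructor <;> linarith
    · right; constructor <;> linarith
  calc ballMoment ν q (2 * δ)
      ≤ ∫⁻ x, 2 ^ q * (powPos q (ν (closedBall (x + -δ) δ)) +
          powPos q (ν (closedBall (x + δ) δ))) :=
        lintegral_mono fun x => (powPos_mono hq ((measure_mono (hsub x)).trans
          (measure_union_le _ _))).trans (powPos_add_le hq _ _)
    _ = (2 ^ q * 2) * ballMoment ν q δ := by
        have hm := measurable_powPos_closedBall ν q δ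
        have hm' : ∀ c, Measurable fun x => powPos q (ν (closedBall (x + c) δ)) := fun c =>
          hm.comp (measurable_add_const c)
        rw [lintegral_const_mul _ (by exact (hm' _).add (hm' _)), lintegral_add_left (hm' _),
          lintegral_add_right_eq_self (fun x => powPos q (ν (closedBall x δ))),
          lintegral_add_right_eq_self (fun x => powPos q (ν (closedBall x δ))),
          ← two_mul, mul_assoc]
        rfl

lemma exists_ballMoment_mul_le (ν : Measure ℝ) [IsFiniteMeasure ν] {q : ℝ} (hq : 0 ≤ q)
    (L : ℝ) : ∃ C : ℝ≥0∞, C ≠ ∞ ∧ ∀ δ, 0 < δ → ballMoment ν q (L * δ) ≤ C * ballMoment ν q δ := by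
  obtain ⟨n, hn⟩ := pow_unbounded_of_one_lt L (one_lt_two (α := ℝ))
  refine ⟨(2 ^ q * 2) ^ n, ENNReal.pow_ne_top (ENNReal.mul_ne_top
    (ENNReal.rpow_ne_top_of_nonneg hq (by simp)) (by simp)), fun δ hδ => ?_⟩
  have key : ∀ n : ℕ, ballMoment ν q (2 ^ n * δ) ≤ (2 ^ q * 2) ^ n * ballMoment ν q δ := by
    intro n
    induction n with
    | zero => simp
    | succ n ih =>
      calc ballMoment ν q (2 ^ (n + 1) * δ) = ballMoment ν q (2 * (2 ^ n * δ)) := by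
            congr 1; ring
        _ ≤ _ := ballMoment_two_mul_le ν hq _
        _ ≤ (2 ^ q * 2) * ((2 ^ q * 2) ^ n * ballMoment ν q δ) := by gcongr
        _ = _ := by ring
  exact (ballMoment_mono ν hq (by gcongr)).trans (key n)

lemma ballMoment_ne_top (ν : Measure ℝ) [IsProbabilityMeasure ν] {q : ℝ} (hq : 0 ≤ q) {R : ℝ}
    (hR : ν (closedBall 0 R)ᶜ = 0) (δ : ℝ) : ballMoment ν q δ ≠ ∞ := by
  have h : ∀ x, powPos q (ν (closedBall x δ)) ≤ (closedBall (0 : ℝ) (R + δ)).indicator 1 x := by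
    intro x
    by_cases hx : x ∈ closedBall (0 : ℝ) (R + δ)
    · rw [indicator_of_mem hx]
      exact (powPos_mono hq prob_le_one).trans_eq (powPos_one q)
    · rw [indicator_of_notMem hx, measure_mono_null _ hR, powPos_zero]
      intro y hy hy'
      simp only [mem_closedBall, Real.dist_eq, not_le] at hx hy hy'
      have := abs_sub_abs_le_abs_sub x y
      rw [abs_sub_comm] at this
      simp at hy' hx
      linarith
  refine ((lintegral_mono h).trans_lt ?_).ne
  rw [lintegral_indicator_one measurableSet_closedBall]
  exact measure_closedBall_lt_top

lemma ballMoment_ne_zero (ν : Measure ℝ) [IsProbabilityMeasure ν] {q : ℝ} (hq : 0 ≤ q) {R : ℝ}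
    (hR : ν (closedBall 0 R)ᶜ = 0) {δ : ℝ} (hδ : 0 < δ) : ballMoment ν q δ ≠ 0 := by
  intro h0
  obtain ⟨C, -, hC⟩ := exists_ballMoment_mul_le ν hq ((R + 1) / δ)
  have h1 := hC δ hδ
  rw [h0, mul_zero, div_mul_cancel₀ _ hδ.ne', nonpos_iff_eq_zero] at h1
  have h2 : volume (closedBall (0 : ℝ) 1) ≤ ballMoment ν q (R + 1) := by
    rw [← lintegral_indicator_one measurableSet_closedBall]
    refine lintegral_mono fun x => ?_
    by_cases hx : x ∈ closedBall (0 : ℝ) 1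
    · have h1 : ν (closedBall x (R + 1)) = 1 := by
        rw [← prob_compl_eq_zero_iff measurableSet_closedBall]
        refine measure_mono_null (compl_subset_compl.2 (closedBall_subset_closedBall' ?_)) hR
        rw [mem_closedBall, dist_comm] at hx
        linarith
      rw [indicator_of_mem hx, h1, powPos_one]
      rfl
    · simp [indicator_of_notMem hx]
  rw [h1, Real.volume_closedBall] at h2
  simp at h2

/-! ### Comparison of ball moments and mesh moments -/

/-- The mesh moment sum as an extended nonnegative real. -/
noncomputable def meshMoment (ν : Measure ℝ) (q δ : ℝ) : ℝ≥0∞ :=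
  ∑' k : ℤ, powPos q (ν (meshCube1 δ k))

lemma Dq1_eq_toReal_meshMoment (ν : Measure ℝ) [IsFiniteMeasure ν] {q : ℝ} (hq : 0 ≤ q) (δ : ℝ) :
    Dq1 ν δ q = (meshMoment ν q δ).toReal := by
  unfold Dq1 meshMoment
  rw [ENNReal.tsum_toReal_eq fun k => powPos_ne_top hq (measure_ne_top _ _)]
  refine tsum_congr fun k => ?_
  unfold powPos
  split_ifs
  · simp
  · rw [ENNReal.toReal_rpow]

lemma ballMoment_eq_tsum (ν : Measure ℝ) (q : ℝ) {δ : ℝ} (hδ : 0 < δ) :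
    ballMoment ν q δ =
      ∑' k : ℤ, ∫⁻ x in Ico ((k : ℝ) * δ) (((k : ℝ) + 1) * δ), powPos q (ν (closedBall x δ)) := by
  have h1 := iUnion_Ico_zsmul hδ
  have h2 := pairwise_disjoint_Ico_zsmul δ
  simp only [zsmul_eq_mul, Int.cast_add, Int.cast_one] at h1 h2
  rw [ballMoment, ← setLIntegral_univ, ← h1, lintegral_iUnion (fun _ => measurableSet_Ico) h2]

lemma volume_Ico_mesh (δ : ℝ) (k : ℤ) :
    volume (Ico ((k : ℝ) * δ) (((k : ℝ) + 1) * δ)) = ENNReal.ofReal δ := by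
  rw [Real.volume_Ico]; congr 1; ring

lemma meshMoment_le (ν : Measure ℝ) {q : ℝ} (hq : 0 ≤ q) {δ : ℝ} (hδ : 0 < δ) :
    ENNReal.ofReal δ * meshMoment ν q δ ≤ ballMoment ν q δ := by
  rw [ballMoment_eq_tsum ν q hδ, meshMoment, ← ENNReal.tsum_mul_left]
  refine ENNReal.tsum_le_tsum fun k => ?_
  rw [← volume_Ico_mesh δ k, mul_comm, ← setLIntegral_const]
  refine setLIntegral_mono' measurableSet_Ico fun x hx => powPos_mono hq (measure_mono ?_)
  intro y hy
  rw [mem_closedBall, Real.dist_eq, abs_le]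
  have h1 := hy.1
  have h2 := hy.2
  have h3 := hx.1
  have h4 := hx.2
  constructor <;> linarith

lemma ballMoment_le_meshMoment (ν : Measure ℝ) {q : ℝ} (hq : 0 ≤ q) {δ : ℝ} (hδ : 0 < δ) :
    ballMoment ν q δ ≤ (2 ^ q * 2 ^ q * 3) * (ENNReal.ofReal δ * meshMoment ν q δ) := by
  set f : ℤ → ℝ≥0∞ := fun k => powPos q (ν (meshCube1 δ k)) with hf
  have h2 : (1 : ℝ≥0∞) ≤ 2 ^ q := by
    simpa using ENNReal.rpow_le_rpow (one_le_two (α := ℝ≥0∞)) hq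
  have hpt : ∀ k : ℤ, ∀ x ∈ Ico ((k : ℝ) * δ) (((k : ℝ) + 1) * δ),
      powPos q (ν (closedBall x δ)) ≤ 2 ^ q * 2 ^ q * (f (k + -1) + (f k + f (k + 1))) := by
    intro k x hx
    have hsub : closedBall x δ ⊆
        meshCube1 δ (k + -1) ∪ (meshCube1 δ k ∪ meshCube1 δ (k + 1)) := by
      intro y hy
      rw [mem_closedBall, Real.dist_eq, abs_le] at hy
      have h3 := hx.1
      have h4 := hx.2
      simp only [meshCube1, mem_union, mem_Icc]
      push_cast
      by_cases h5 : y ≤ k * δ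
      · left; constructor <;> linarith
      · by_cases h6 : y ≤ (k + 1) * δ
        · right; left; constructor <;> linarith
        · right; right; constructor <;> linarith
    calc powPos q (ν (closedBall x δ))
        ≤ powPos q (ν (meshCube1 δ (k + -1)) + (ν (meshCube1 δ k) + ν (meshCube1 δ (k + 1)))) :=
          powPos_mono hq ((measure_mono hsub).trans ((measure_union_le _ _).trans
            (by gcongr; exact measure_union_le _ _)))
      _ ≤ 2 ^ q * (f (k + -1) + 2 ^ q * (f k + f (k + 1))) :=
          (powPos_add_le hq _ _).trans (by gcongr; exact powPos_add_le hq _ _)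
      _ ≤ 2 ^ q * (2 ^ q * f (k + -1) + 2 ^ q * (f k + f (k + 1))) := by
          gcongr
          exact le_mul_of_one_le_left zero_le h2
      _ = _ := by ring
  have hshift : ∀ c : ℤ, ∑' k, f (k + c) = ∑' k, f k := fun c => (Equiv.addRight c).tsum_eq f
  calc ballMoment ν q δ
      ≤ ∑' k : ℤ, 2 ^ q * 2 ^ q * (f (k + -1) + (f k + f (k + 1))) * ENNReal.ofReal δ := by
        rw [ballMoment_eq_tsum ν q hδ]
        refine ENNReal.tsum_le_tsum fun k => ?_
        rw [← volume_Ico_mesh δ k, ← setLIntegral_const]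
        exact setLIntegral_mono' measurableSet_Ico (hpt k)
    _ = _ := by
        rw [ENNReal.tsum_mul_right, ENNReal.tsum_mul_left, ENNReal.tsum_add, ENNReal.tsum_add,
          hshift, hshift, meshMoment]
        ring

/-! ### Affine changes of variables -/

lemma lintegral_comp_affine {F : ℝ → ℝ≥0∞} {σ : ℝ} (hσ : σ ≠ 0) (t : ℝ) :
    ∫⁻ x, F ((x - t) / σ) = ENNReal.ofReal |σ| * ∫⁻ x, F x := by
  rw [lintegral_sub_right_eq_self (fun x => F (x / σ)) t]
  have h := Real.map_volume_mul_left (inv_ne_zero hσ)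
  rw [inv_inv] at h
  have he : MeasurableEmbedding (σ⁻¹ * · : ℝ → ℝ) :=
    (MeasurableEquiv.mulLeft₀ σ⁻¹ (inv_ne_zero hσ)).measurableEmbedding
  calc ∫⁻ x, F (x / σ) = ∫⁻ x, F (σ⁻¹ * x) := by simp only [div_eq_inv_mul]
    _ = ∫⁻ x, F x ∂(Measure.map (σ⁻¹ * ·) volume) := (he.lintegral_map F).symm
    _ = _ := by rw [h, lintegral_smul_measure, smul_eq_mul]

lemma preimage_affine_closedBall {σ : ℝ} (hσ : σ ≠ 0) (t x δ : ℝ) :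
    (fun y => σ * y + t) ⁻¹' closedBall x δ = closedBall ((x - t) / σ) (δ / |σ|) := by
  ext y
  have h : |y - (x - t) / σ| = |σ * y + t - x| / |σ| := by
    rw [← abs_div]; congr 1; field_simp; ring
  rw [mem_preimage, mem_closedBall, mem_closedBall, Real.dist_eq, Real.dist_eq, h,
    div_le_div_iff_of_pos_right (abs_pos.2 hσ)]

lemma lintegral_powPos_preimage_affine (ν : Measure ℝ) (q : ℝ) {σ : ℝ} (hσ : σ ≠ 0) (t δ : ℝ) :
    ∫⁻ x, powPos q (ν ((fun y => σ * y + t) ⁻¹' closedBall x δ)) =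
      ENNReal.ofReal |σ| * ballMoment ν q (δ / |σ|) := by
  simp only [preimage_affine_closedBall hσ]
  exact lintegral_comp_affine (F := fun x => powPos q (ν (closedBall x (δ / |σ|)))) hσ t

lemma measurable_powPos_preimage_affine (ν : Measure ℝ) [IsFiniteMeasure ν] (q : ℝ) {σ : ℝ}
    (hσ : σ ≠ 0) (t δ : ℝ) :
    Measurable fun x => powPos q (ν ((fun y => σ * y + t) ⁻¹' closedBall x δ)) := by
  simp only [preimage_affine_closedBall hσ]
  exact (measurable_powPos_closedBall ν q (δ / |σ|)).comp
    ((measurable_id.sub_const t).div_const σ)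

lemma lintegral_lintegral_indicator_closedBall {G : ℝ → ℝ≥0∞} (hG : Measurable G) (c : ℝ) :
    ∫⁻ z, ∫⁻ x, (closedBall z c).indicator G x = ENNReal.ofReal (2 * c) * ∫⁻ x, G x := by
  have hm : Measurable (Function.uncurry fun z x => (closedBall z c).indicator G x) := by
    have hs : MeasurableSet {y : ℝ × ℝ | dist y.2 y.1 ≤ c} :=
      measurableSet_le (by fun_prop) (by fun_prop)
    exact (hG.comp measurable_snd).indicator hs
  rw [lintegral_lintegral_swap hm.aemeasurable, mul_comm, ← lintegral_mul_const _ hG]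
  refine lintegral_congr fun x => ?_
  have : (fun z => (closedBall z c).indicator G x) = (closedBall x c).indicator fun _ => G x := by
    ext z
    simp only [indicator, mem_closedBall, dist_comm]
  rw [this, lintegral_indicator_const measurableSet_closedBall, Real.volume_closedBall]

/-! ### Graph-directed self-similar families on the line -/

/-- A finite family of probability measures on the line, each of which is a weighted sum of
images of members of the family under contracting similarities `y ↦ σ y + t`. -/
structure SelfSimilarFamily (I K : Type) [Fintype K] where
  ν : I → Measure ℝ
  isProb : ∀ i, IsProbabilityMeasure (ν i)
  src : K → I
  tgt : K → I
  w : K → ℝ≥0∞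
  w_ne_zero : ∀ k, w k ≠ 0
  σ : K → ℝ
  t : K → ℝ
  abs_σ_pos : ∀ k, 0 < |σ k|
  abs_σ_lt_one : ∀ k, |σ k| < 1
  apply_eq : ∀ i B, MeasurableSet B → ν i B =
    ∑ k, if src k = i then w k * ν (tgt k) ((fun y => σ k * y + t k) ⁻¹' B) else 0

lemma exists_uniform_bound {K : Type} [Finite K] (f : K → ℝ) (a : ℝ) :
    ∃ M, a ≤ M ∧ ∀ k, f k ≤ M := by
  obtain ⟨M, hM⟩ := (Set.finite_range f).bddAbove
  exact ⟨max a M, le_max_left _ _, fun k => (hM (mem_range_self k)).trans (le_max_right _ _)⟩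

lemma exists_uniform_lt_one {K : Type} [Finite K] (f : K → ℝ) (hf : ∀ k, f k < 1) :
    ∃ l, 0 < l ∧ l < 1 ∧ ∀ k, f k ≤ l := by
  cases isEmpty_or_nonempty K
  · exact ⟨1 / 2, by norm_num, by norm_num, fun k => isEmptyElim k⟩
  · obtain ⟨k₀, hk₀⟩ := Finite.exists_max f
    exact ⟨max (1 / 2) (f k₀), by positivity, max_lt (by norm_num) (hf k₀),
      fun k => (hk₀ k).trans (le_max_right _ _)⟩

lemma exists_uniform_pos {K : Type} [Finite K] (f : K → ℝ) (hf : ∀ k, 0 < f k) :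
    ∃ l, 0 < l ∧ l ≤ 1 ∧ ∀ k, l ≤ f k := by
  obtain ⟨l, h0, h1, hl⟩ := exists_uniform_lt_one (fun k => 1 - f k) fun k => by linarith [hf k]
  exact ⟨1 - l, by linarith, by linarith, fun k => by linarith [hl k]⟩

namespace SelfSimilarFamily

variable {I K : Type} [Fintype K] (F : SelfSimilarFamily I K)

instance (i : I) : IsProbabilityMeasure (F.ν i) := F.isProb i

/-- One-step adjacency of indices. -/
def Step (i j : I) : Prop := ∃ k, F.src k = i ∧ F.tgt k = j

/-- Reachability of indices. -/
def Reach : I → I → Prop := Relation.ReflTransGen F.Step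

lemma sum_w (i : I) : ∑ k, (if F.src k = i then F.w k else 0) = 1 := by
  have h := F.apply_eq i univ MeasurableSet.univ
  simp only [preimage_univ, measure_univ, mul_one] at h
  exact h.symm

lemma exists_support [Finite I] : ∃ R, 0 ≤ R ∧ ∀ i, F.ν i (closedBall 0 R)ᶜ = 0 := by
  obtain ⟨l, hl0, hl1, hl⟩ := exists_uniform_lt_one (fun k => |F.σ k|) F.abs_σ_lt_one
  obtain ⟨c, hc0, hc⟩ := exists_uniform_bound (fun k => |F.t k|) 0
  have hl1' : 0 < 1 - l := by linarith
  set r : ℕ → ℝ := fun n => c / (1 - l) + (l⁻¹) ^ n with hr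
  have hstep : ∀ n k y, |y| ≤ r (n + 1) → |F.σ k * y + F.t k| ≤ r n := by
    intro n k y hy
    have hrn : l * r (n + 1) + c = r n := by
      simp only [hr, pow_succ]; field_simp; ring
    calc |F.σ k * y + F.t k| ≤ |F.σ k| * |y| + |F.t k| := by
          rw [← abs_mul]; exact abs_add_le _ _
      _ ≤ l * r (n + 1) + c := by
          gcongr
          · exact hl k
          · exact hc k
      _ = r n := hrn
  have hmono : ∀ η : ℝ≥0∞, ∀ n, (∀ j, F.ν j (closedBall 0 (r n))ᶜ ≤ η) →
      ∀ j, F.ν j (closedBall 0 (r 0))ᶜ ≤ η := by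
    intro η n
    induction n with
    | zero => exact fun h => h
    | succ n ih =>
      refine fun h => ih fun j => ?_
      rw [F.apply_eq j _ measurableSet_closedBall.compl]
      calc _ ≤ ∑ k, (if F.src k = j then F.w k else 0) * η := by
            refine Finset.sum_le_sum fun k _ => ?_
            split_ifs
            · gcongr
              refine (measure_mono ?_).trans (h (F.tgt k))
              intro y hy hy'
              refine hy ?_
              simp only [mem_closedBall, dist_zero_right, Real.norm_eq_abs] at hy' ⊢
              exact hstep n k y hy'
            · simp
        _ = η := by rw [← Finset.sum_mul, F.sum_w, one_mul]
  refine ⟨r 0, by positivity, fun i => ?_⟩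
  have hrt : Tendsto r atTop atTop :=
    tendsto_atTop_add_const_left _ _ (tendsto_pow_atTop_atTop_of_one_lt (one_lt_inv₀ hl0 |>.2 hl1))
  have hlim : ∀ j, Tendsto (fun n => F.ν j (closedBall 0 (r n))ᶜ) atTop (𝓝 0) := by
    intro j
    have h := tendsto_measure_compl_closedBall_of_isTightMeasureSet
      (isTightMeasureSet_singleton (μ := F.ν j)) (0 : ℝ)
    simp only [iSup_singleton] at h
    exact h.comp hrt
  refine le_antisymm (le_of_forall_gt fun η hη => ?_) zero_le
  obtain ⟨η', hη_lt0, hη_lt⟩ := exists_between hη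
  obtain ⟨n, hn⟩ := (eventually_all.2 fun j => (hlim j).eventually (gt_mem_nhds hη_lt0)).exists
  exact (hmono η' n (fun j => (hn j).le) i).trans_lt hη_lt

/-- A decomposition of `ν i` into similar copies of members of the family, all of size
comparable to `ε`. -/
structure Cut (ρ ε : ℝ) (i : I) where
  J : Type
  fin : Fintype J
  w : J → ℝ≥0∞
  tgt : J → I
  σ : J → ℝ
  t : J → ℝ
  apply_eq : ∀ B, MeasurableSet B → F.ν i B =
    ∑ k, w k * F.ν (tgt k) ((fun y => σ k * y + t k) ⁻¹' B)
  le_abs_σ : ∀ k, ρ * ε ≤ |σ k|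
  abs_σ_le : ∀ k, |σ k| ≤ ε
  reach : ∀ k, F.Reach i (tgt k)

attribute [instance] Cut.fin

/-- The one-piece decomposition. -/
def trivialCut {ρ ε : ℝ} (hρ : ρ * ε ≤ 1) (hε : 1 ≤ ε) (i : I) : F.Cut ρ ε i where
  J := Unit
  fin := inferInstance
  w _ := 1
  tgt _ := i
  σ _ := 1
  t _ := 0
  apply_eq B _ := by simp
  le_abs_σ _ := by simpa using hρ
  abs_σ_le _ := by simpa using hε
  reach _ := Relation.ReflTransGen.refl

/-- The decomposition obtained by cutting each first-level piece further. -/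
noncomputable def refineCut {ρ ε : ℝ} (i : I) (C : ∀ k, F.Cut ρ (ε / |F.σ k|) (F.tgt k)) : F.Cut ρ ε i where
  J := Σ k : {k // F.src k = i}, (C k).J
  fin := inferInstance
  w x := F.w x.1 * (C x.1).w x.2
  tgt x := (C x.1).tgt x.2
  σ x := F.σ x.1 * (C x.1).σ x.2
  t x := F.σ x.1 * (C x.1).t x.2 + F.t x.1
  apply_eq B hB := by
    rw [F.apply_eq i B hB, Fintype.sum_sigma, ← Finset.sum_filter,
      ← Finset.sum_subtype_of_mem (p := fun k => F.src k = i)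
        (fun k => F.w k * F.ν (F.tgt k) ((fun y => F.σ k * y + F.t k) ⁻¹' B)) (by simp)]
    have hu : (Finset.univ.filter fun k => F.src k = i).subtype (fun k => F.src k = i)
        = Finset.univ := by
      ext k; simp [k.2]
    rw [hu]
    refine Finset.sum_congr rfl fun k _ => ?_
    have hm : MeasurableSet ((fun y => F.σ k * y + F.t k) ⁻¹' B) :=
      (by fun_prop : Measurable fun y => F.σ k * y + F.t k) hB
    rw [(C k).apply_eq _ hm, Finset.mul_sum]
    refine Finset.sum_congr rfl fun j _ => ?_
    rw [mul_assoc]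
    congr 3
    ext y
    simp only [mem_preimage]
    rw [show F.σ k * ((C k).σ j * y + (C k).t j) + F.t k =
      F.σ k * (C k).σ j * y + (F.σ k * (C k).t j + F.t k) by ring]
  le_abs_σ x := by
    have h := (C x.1).le_abs_σ x.2
    rw [abs_mul]
    calc ρ * ε = |F.σ x.1| * (ρ * (ε / |F.σ x.1|)) := by
          have := (F.abs_σ_pos x.1).ne'
          field_simp
      _ ≤ _ := by gcongr
  abs_σ_le x := by
    have h := (C x.1).abs_σ_le x.2
    rw [abs_mul]
    calc _ ≤ |F.σ x.1| * (ε / |F.σ x.1|) := by gcongr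
      _ = ε := mul_div_cancel₀ _ (F.abs_σ_pos x.1).ne'
  reach x := ((C x.1).reach x.2).head ⟨x.1, x.1.2, rfl⟩

lemma exists_cut : ∃ ρ : ℝ, 0 < ρ ∧ ρ ≤ 1 ∧ ∀ ε, 0 < ε → ε ≤ 1 → ∀ i, Nonempty (F.Cut ρ ε i) := by
  obtain ⟨ρ, hρ0, hρ1, hρ⟩ := exists_uniform_pos (fun k => |F.σ k|) F.abs_σ_pos
  obtain ⟨l, hl0, hl1, hl⟩ := exists_uniform_lt_one (fun k => |F.σ k|) F.abs_σ_lt_one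
  have key : ∀ n : ℕ, ∀ ε, l ^ n ≤ ε → ρ * ε ≤ 1 → ∀ i, Nonempty (F.Cut ρ ε i) := by
    intro n
    induction n with
    | zero => exact fun ε h1 h2 i => ⟨F.trivialCut h2 (by simpa using h1) i⟩
    | succ n ih =>
      intro ε h1 h2 i
      rcases le_total 1 ε with hε | hε
      · exact ⟨F.trivialCut h2 hε i⟩
      have hε0 : 0 < ε := (by positivity : 0 < l ^ (n + 1)).trans_le h1
      refine ⟨F.refineCut i fun k => (ih (ε / |F.σ k|) ?_ ?_ (F.tgt k)).some⟩
      · rw [le_div_iff₀ (F.abs_σ_pos k)]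
        calc l ^ n * |F.σ k| ≤ l ^ n * l := by gcongr; exact hl k
          _ ≤ ε := by rwa [← pow_succ]
      · rw [mul_div_assoc', div_le_one (F.abs_σ_pos k)]
        calc ρ * ε ≤ ρ * 1 := by gcongr
          _ ≤ _ := by simpa using hρ k
  refine ⟨ρ, hρ0, hρ1, fun ε hε0 hε1 i => ?_⟩
  obtain ⟨n, hn⟩ := exists_pow_lt_of_lt_one hε0 hl1
  exact key n ε hn.le (by nlinarith) i

/-- Moments of reachable members of the family are dominated. -/
lemma exists_moment_le_of_reach {q : ℝ} (hq : 0 ≤ q) {i j : I} (h : F.Reach i j) :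
    ∃ C : ℝ≥0∞, C ≠ ∞ ∧ ∀ δ, 0 < δ → ballMoment (F.ν j) q δ ≤ C * ballMoment (F.ν i) q δ := by
  induction h with
  | refl => exact ⟨1, by simp, fun δ _ => by simp⟩
  | @tail a b _ hab ih =>
    obtain ⟨C, hC, hle⟩ := ih
    obtain ⟨k, rfl, rfl⟩ := hab
    have hσ : F.σ k ≠ 0 := abs_pos.1 (F.abs_σ_pos k)
    set c : ℝ≥0∞ := F.w k ^ q * ENNReal.ofReal |F.σ k| with hc
    have hw1 : F.w k ≤ 1 := by
      rw [← F.sum_w (F.src k)]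
      refine le_trans ?_ (Finset.single_le_sum (fun _ _ => zero_le) (Finset.mem_univ k))
      simp
    have hwt : F.w k ≠ ∞ := ne_top_of_le_ne_top (by simp) hw1
    have hc0 : c ≠ 0 := mul_ne_zero (ENNReal.rpow_pos (pos_iff_ne_zero.2 (F.w_ne_zero k)) hwt).ne'
      (by simpa using F.abs_σ_pos k)
    have hct : c ≠ ∞ := ENNReal.mul_ne_top (ENNReal.rpow_ne_top_of_nonneg hq hwt) (by simp)
    have hone : ∀ δ, 0 < δ →
        c * ballMoment (F.ν (F.tgt k)) q δ ≤ ballMoment (F.ν (F.src k)) q δ := by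
      intro δ hδ
      calc c * ballMoment (F.ν (F.tgt k)) q δ
          ≤ c * ballMoment (F.ν (F.tgt k)) q (δ / |F.σ k|) := by
            gcongr
            exact ballMoment_mono _ hq (le_div_self hδ.le (F.abs_σ_pos k) (F.abs_σ_lt_one k).le)
        _ = ∫⁻ x, F.w k ^ q *
              powPos q (F.ν (F.tgt k) ((fun y => F.σ k * y + F.t k) ⁻¹' closedBall x δ)) := by
            rw [lintegral_const_mul _ (measurable_powPos_preimage_affine _ q hσ _ _),
              lintegral_powPos_preimage_affine _ _ hσ, hc, mul_assoc]
        _ ≤ _ := by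
            refine lintegral_mono fun x => ?_
            rw [← powPos_mul hq (F.w_ne_zero k), F.apply_eq _ _ measurableSet_closedBall]
            refine powPos_mono hq (le_trans ?_
              (Finset.single_le_sum (fun _ _ => zero_le) (Finset.mem_univ k)))
            simp
    refine ⟨c⁻¹ * C, ENNReal.mul_ne_top (ENNReal.inv_ne_top.2 hc0) hC, fun δ hδ => ?_⟩
    calc ballMoment (F.ν (F.tgt k)) q δ
        = c⁻¹ * (c * ballMoment (F.ν (F.tgt k)) q δ) := by
          rw [← mul_assoc, ENNReal.inv_mul_cancel hc0 hct, one_mul]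
      _ ≤ c⁻¹ * (C * ballMoment (F.ν i) q δ) := by
          gcongr c⁻¹ * ?_
          exact (hone δ hδ).trans (hle δ hδ)
      _ = _ := by rw [mul_assoc]

namespace Cut

variable {F} {ρ ε R q δ : ℝ} {i : I} (C : F.Cut ρ ε i)

/-- The mass of the `k`-th normalised piece inside the preimage of a ball. -/
noncomputable def pieceMass (k : C.J) (x η : ℝ) : ℝ≥0∞ :=
  F.ν (C.tgt k) ((fun y => C.σ k * y + C.t k) ⁻¹' closedBall x η)

lemma apply_closedBall (x η : ℝ) : F.ν i (closedBall x η) = ∑ k, C.w k * C.pieceMass k x η :=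
  C.apply_eq _ measurableSet_closedBall

lemma pieceMass_le_one (k : C.J) (x η : ℝ) : C.pieceMass k x η ≤ 1 := prob_le_one

lemma pieceMass_eq_zero (hR : ∀ i, F.ν i (closedBall 0 R)ᶜ = 0) (k : C.J) {x η : ℝ}
    (h : R * ε + η < |C.t k - x|) : C.pieceMass k x η = 0 := by
  refine measure_mono_null (t := (closedBall 0 R)ᶜ) (fun y hy hy' => ?_) (hR (C.tgt k))
  simp only [mem_preimage, mem_closedBall, Real.dist_eq, sub_zero] at hy hy'
  have h1 : |C.σ k * y| ≤ R * ε := by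
    rw [abs_mul, mul_comm R]
    exact mul_le_mul (C.abs_σ_le k) hy' (abs_nonneg _) ((abs_nonneg _).trans (C.abs_σ_le k))
  have h2 : |C.t k - x| ≤ |C.σ k * y + C.t k - x| + |C.σ k * y| := by
    calc |C.t k - x| = |(C.σ k * y + C.t k - x) - C.σ k * y| := by congr 1; ring
      _ ≤ _ := abs_sub _ _
  linarith

lemma pieceMass_eq_one (hR : ∀ i, F.ν i (closedBall 0 R)ᶜ = 0) (k : C.J) {x η : ℝ}
    (h : R * ε + |C.t k - x| ≤ η) : C.pieceMass k x η = 1 := by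
  have hm : MeasurableSet ((fun y => C.σ k * y + C.t k) ⁻¹' closedBall x η) :=
    (by fun_prop : Measurable fun y => C.σ k * y + C.t k) measurableSet_closedBall
  rw [pieceMass, ← prob_compl_eq_zero_iff hm]
  refine measure_mono_null (compl_subset_compl.2 fun y hy => ?_) (hR (C.tgt k))
  simp only [mem_preimage, mem_closedBall, Real.dist_eq, sub_zero] at hy ⊢
  have h1 : |C.σ k * y| ≤ R * ε := by
    rw [abs_mul, mul_comm R]
    exact mul_le_mul (C.abs_σ_le k) hy (abs_nonneg _) ((abs_nonneg _).trans (C.abs_σ_le k))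
  have h2 : |C.σ k * y + C.t k - x| ≤ |C.σ k * y| + |C.t k - x| := by
    rw [add_sub_assoc]; exact abs_add_le _ _
  linarith

/-- The weight of the `k`-th piece if it is based within `s` of `z`, and `0` otherwise. -/
noncomputable def nearWeight (s z : ℝ) (k : C.J) : ℝ≥0∞ := if |C.t k - z| ≤ s then C.w k else 0

lemma nearWeight_le (s z : ℝ) (k : C.J) : C.nearWeight s z k ≤ C.w k := by
  unfold nearWeight; split_ifs <;> simp

lemma sum_nearWeight_le (hR : ∀ i, F.ν i (closedBall 0 R)ᶜ = 0) (s z : ℝ) :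
    ∑ k, C.nearWeight s z k ≤ F.ν i (closedBall z (R * ε + s)) := by
  rw [C.apply_closedBall]
  refine Finset.sum_le_sum fun k _ => ?_
  unfold nearWeight
  split_ifs with h
  · rw [C.pieceMass_eq_one hR k (by linarith), mul_one]
  · exact zero_le

lemma sum_nearWeight_ne_top (hR : ∀ i, F.ν i (closedBall 0 R)ᶜ = 0) (s z : ℝ) :
    ∑ k, C.nearWeight s z k ≠ ∞ :=
  ne_top_of_le_ne_top (measure_ne_top _ _) (C.sum_nearWeight_le hR s z)

lemma le_sum_nearWeight (hR : ∀ i, F.ν i (closedBall 0 R)ᶜ = 0) {s η z : ℝ}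
    (hs : R * ε + η ≤ s) : F.ν i (closedBall z η) ≤ ∑ k, C.nearWeight s z k := by
  rw [C.apply_closedBall]
  refine Finset.sum_le_sum fun k _ => ?_
  unfold nearWeight
  split_ifs with h
  · exact mul_le_of_le_one_right zero_le (C.pieceMass_le_one k z η)
  · rw [C.pieceMass_eq_zero hR k (by linarith), mul_zero]

lemma σ_ne_zero (hρε : 0 < ρ * ε) (k : C.J) : C.σ k ≠ 0 := abs_pos.1 (hρε.trans_le (C.le_abs_σ k))

lemma measurable_powPos_pieceMass (hρε : 0 < ρ * ε) (q : ℝ) (k : C.J) (η : ℝ) :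
    Measurable fun x => powPos q (C.pieceMass k x η) :=
  measurable_powPos_preimage_affine _ q (C.σ_ne_zero hρε k) _ _

lemma lintegral_powPos_pieceMass (hρε : 0 < ρ * ε) (q : ℝ) (k : C.J) (η : ℝ) :
    ∫⁻ x, powPos q (C.pieceMass k x η) =
      ENNReal.ofReal |C.σ k| * ballMoment (F.ν (C.tgt k)) q (η / |C.σ k|) :=
  lintegral_powPos_preimage_affine _ q (C.σ_ne_zero hρε k) _ _

lemma lintegral_jensen (hρε : 0 < ρ * ε) (q s z η : ℝ) :
    ∫⁻ x, jensenWeight q (∑ k, C.nearWeight s z k) *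
        ∑ k, C.nearWeight s z k * powPos q (C.pieceMass k x η) =
      jensenWeight q (∑ k, C.nearWeight s z k) *
        ∑ k, C.nearWeight s z k * ∫⁻ x, powPos q (C.pieceMass k x η) := by
  have hm := fun k => C.measurable_powPos_pieceMass hρε q k η
  rw [lintegral_const_mul _ (Finset.measurable_sum _ fun k _ => (hm k).const_mul _),
    lintegral_finsetSum _ fun k _ => (hm k).const_mul _]
  congr 2
  ext k
  rw [lintegral_const_mul _ (hm k)]

/-- Submultiplicativity of moments for `1 ≤ q`. -/
lemma moment_mul_le (C : F.Cut ρ ε i) (hρε : 0 < ρ * ε) (hq : 1 ≤ q)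
    (hR : ∀ i, F.ν i (closedBall 0 R)ᶜ = 0) (hρ : 0 < ρ) (hδ0 : 0 ≤ δ) (hδ : δ ≤ 1) {M : ℝ≥0∞}
    (hM : ∀ j, F.Reach i j → ballMoment (F.ν j) q (ρ⁻¹ * δ) ≤ M) :
    2 * ballMoment (F.ν i) q (δ * ε) ≤ M * ballMoment (F.ν i) q ((2 * R + 2) * ε) := by
  have hq0 : 0 ≤ q := by linarith
  have hε : 0 < ε := by nlinarith
  set s := (R + 2) * ε with hs
  have hpt : ∀ z x, (closedBall z ε).indicator
      (fun x => powPos q (F.ν i (closedBall x (δ * ε)))) x ≤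
        jensenWeight q (∑ k, C.nearWeight s z k) *
        ∑ k, C.nearWeight s z k * powPos q (C.pieceMass k x (δ * ε)) := by
    intro z x
    by_cases hx : x ∈ closedBall z ε
    swap
    · rw [indicator_of_notMem hx]
      exact zero_le
    rw [indicator_of_mem hx]
    refine le_trans ?_ (powPos_sum_le _ hq _ _)
    refine powPos_mono hq0 ?_
    rw [C.apply_closedBall]
    refine Finset.sum_le_sum fun k _ => ?_
    unfold nearWeight
    split_ifs with h
    · exact le_rfl
    · rw [C.pieceMass_eq_zero hR k, mul_zero]
      · exact zero_le
      · rw [mem_closedBall, Real.dist_eq] at hx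
        have h1 : |C.t k - z| ≤ |C.t k - x| + |x - z| := abs_sub_le _ _ _
        have h2 : δ * ε ≤ ε := by nlinarith
        push Not at h
        linarith
  have hint : ∀ k, ∫⁻ x, powPos q (C.pieceMass k x (δ * ε)) ≤ ENNReal.ofReal ε * M := by
    intro k
    rw [C.lintegral_powPos_pieceMass hρε]
    have hσ := abs_pos.2 (C.σ_ne_zero hρε k)
    gcongr
    · exact C.abs_σ_le k
    · refine (ballMoment_mono _ hq0 ?_).trans (hM _ (C.reach k))
      rw [div_le_iff₀ hσ, inv_mul_eq_div, div_mul_eq_mul_div, le_div_iff₀ hρ]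
      nlinarith [C.le_abs_σ k]
  have hz : ∀ z, ∫⁻ x, (closedBall z ε).indicator
      (fun x => powPos q (F.ν i (closedBall x (δ * ε)))) x ≤
        (ENNReal.ofReal ε * M) * powPos q (F.ν i (closedBall z ((2 * R + 2) * ε))) := by
    intro z
    calc _ ≤ _ := lintegral_mono (hpt z)
      _ = _ := C.lintegral_jensen hρε q s z (δ * ε)
      _ ≤ jensenWeight q (∑ k, C.nearWeight s z k) *
          ∑ k, C.nearWeight s z k * (ENNReal.ofReal ε * M) := by
        gcongr with k _
        exact hint k
      _ = (ENNReal.ofReal ε * M) * powPos q (∑ k, C.nearWeight s z k) := by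
        rw [← Finset.sum_mul, ← mul_assoc,
          jensenWeight_mul_self q (C.sum_nearWeight_ne_top hR s z), mul_comm]
      _ ≤ _ := by
        gcongr
        refine powPos_mono hq0 ((C.sum_nearWeight_le hR s z).trans_eq ?_)
        rw [hs]; congr 2; ring
  have hε' : ENNReal.ofReal ε ≠ 0 := by simpa using hε
  rw [← ENNReal.mul_le_mul_iff_right hε' ENNReal.ofReal_ne_top]
  calc ENNReal.ofReal ε * (2 * ballMoment (F.ν i) q (δ * ε))
      = ENNReal.ofReal (2 * ε) * ballMoment (F.ν i) q (δ * ε) := by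
        rw [ENNReal.ofReal_mul (by norm_num)]; simp; ring
    _ = ∫⁻ z, ∫⁻ x, (closedBall z ε).indicator
          (fun x => powPos q (F.ν i (closedBall x (δ * ε)))) x :=
        (lintegral_lintegral_indicator_closedBall (measurable_powPos_closedBall _ _ _) _).symm
    _ ≤ _ := lintegral_mono hz
    _ = _ := by
        rw [lintegral_const_mul _ (measurable_powPos_closedBall _ _ _), mul_assoc]; rfl

/-- Supermultiplicativity of moments for `0 ≤ q ≤ 1`. -/
lemma le_moment_mul (C : F.Cut ρ ε i) (hρε : 0 < ρ * ε) (hq0 : 0 ≤ q) (hq : q ≤ 1)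
    (hR : ∀ i, F.ν i (closedBall 0 R)ᶜ = 0) (hρ : 0 < ρ) (hδ0 : 0 ≤ δ) (hδ : δ ≤ 1) {m : ℝ≥0∞}
    (hm : ∀ j, F.Reach i j → m ≤ ballMoment (F.ν j) q δ) :
    ENNReal.ofReal ρ * m * ballMoment (F.ν i) q ε ≤
      ENNReal.ofReal (2 * (2 * R + 2)) * ballMoment (F.ν i) q (δ * ε) := by
  have hε : 0 < ε := by nlinarith
  set s := (R + 1) * ε with hs
  have hpt : ∀ z x, jensenWeight q (∑ k, C.nearWeight s z k) *
        ∑ k, C.nearWeight s z k * powPos q (C.pieceMass k x (δ * ε)) ≤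
      (closedBall z ((2 * R + 2) * ε)).indicator
        (fun x => powPos q (F.ν i (closedBall x (δ * ε)))) x := by
    intro z x
    by_cases hx : x ∈ closedBall z ((2 * R + 2) * ε)
    · rw [indicator_of_mem hx]
      refine (le_powPos_sum _ hq0 hq _ _ (C.sum_nearWeight_ne_top hR s z)).trans
        (powPos_mono hq0 ?_)
      rw [C.apply_closedBall]
      gcongr with k _
      exact C.nearWeight_le s z k
    · rw [indicator_of_notMem hx]
      refine (mul_eq_zero_of_right _ (Finset.sum_eq_zero fun k _ => ?_)).le
      unfold nearWeight
      split_ifs with h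
      · rw [C.pieceMass_eq_zero hR k, powPos_zero, mul_zero]
        rw [mem_closedBall, Real.dist_eq] at hx
        have h1 : |x - z| ≤ |C.t k - x| + |C.t k - z| := by
          rw [abs_sub_comm (C.t k) x]; exact abs_sub_le _ _ _
        have h2 : δ * ε ≤ ε := by nlinarith
        push Not at hx
        linarith
      · simp
  have hint : ∀ k, ENNReal.ofReal (ρ * ε) * m ≤ ∫⁻ x, powPos q (C.pieceMass k x (δ * ε)) := by
    intro k
    rw [C.lintegral_powPos_pieceMass hρε]
    have hσ := abs_pos.2 (C.σ_ne_zero hρε k)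
    gcongr
    · exact C.le_abs_σ k
    · refine (hm _ (C.reach k)).trans (ballMoment_mono _ hq0 ?_)
      rw [le_div_iff₀ hσ]
      nlinarith [C.abs_σ_le k]
  have hz : ∀ z, (ENNReal.ofReal (ρ * ε) * m) * powPos q (F.ν i (closedBall z ε)) ≤
      ∫⁻ x, (closedBall z ((2 * R + 2) * ε)).indicator
        (fun x => powPos q (F.ν i (closedBall x (δ * ε)))) x := by
    intro z
    calc _ ≤ (ENNReal.ofReal (ρ * ε) * m) * powPos q (∑ k, C.nearWeight s z k) := by
          gcongr
          exact powPos_mono hq0 (C.le_sum_nearWeight hR (by rw [hs]; linarith))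
      _ = jensenWeight q (∑ k, C.nearWeight s z k) *
          ∑ k, C.nearWeight s z k * (ENNReal.ofReal (ρ * ε) * m) := by
        rw [← Finset.sum_mul, ← mul_assoc (jensenWeight _ _),
          jensenWeight_mul_self q (C.sum_nearWeight_ne_top hR s z), mul_comm]
      _ ≤ _ := by
        gcongr with k _
        exact hint k
      _ = _ := (C.lintegral_jensen hρε q s z (δ * ε)).symm
      _ ≤ _ := lintegral_mono (hpt z)
  have hε' : ENNReal.ofReal ε ≠ 0 := by simpa using hε
  rw [← ENNReal.mul_le_mul_iff_right hε' ENNReal.ofReal_ne_top]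
  calc ENNReal.ofReal ε * (ENNReal.ofReal ρ * m * ballMoment (F.ν i) q ε)
      = ∫⁻ z, (ENNReal.ofReal (ρ * ε) * m) * powPos q (F.ν i (closedBall z ε)) := by
        rw [lintegral_const_mul _ (measurable_powPos_closedBall _ _ _),
          ENNReal.ofReal_mul hρ.le, ballMoment]
        ring
    _ ≤ _ := lintegral_mono hz
    _ = _ := lintegral_lintegral_indicator_closedBall (measurable_powPos_closedBall _ _ _) _
    _ = _ := by
        rw [← mul_assoc (2 : ℝ), mul_comm _ ε, ENNReal.ofReal_mul hε.le, mul_assoc]; rfl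

end Cut

end SelfSimilarFamily

/-! ### Fekete's lemma with an additive error, and passage to continuous scales -/

lemma exists_tendsto_div_of_le_add {L : ℕ → ℝ} {A B c : ℝ}
    (hsub : ∀ m n, L (m + n) ≤ L m + L n + c) (hlow : ∀ n : ℕ, A - B * n ≤ L n) :
    ∃ l, Tendsto (fun n : ℕ => L n / n) atTop (𝓝 l) := by
  have hu : Subadditive fun n => L n + c := fun m n => by linarith [hsub m n]
  have hbdd : BddBelow (range fun n : ℕ => (L n + c) / n) := by
    refine ⟨-(|A + c| + |B|), ?_⟩
    rintro _ ⟨n, rfl⟩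
    rcases Nat.eq_zero_or_pos n with rfl | hn
    · simp only [Nat.cast_zero, div_zero]
      linarith [abs_nonneg (A + c), abs_nonneg B]
    · have hn' : (1 : ℝ) ≤ n := by exact_mod_cast hn
      simp only
      rw [le_div_iff₀ (by linarith)]
      nlinarith [hlow n, neg_abs_le (A + c), le_abs_self B, abs_nonneg (A + c)]
  refine ⟨hu.lim - 0, ((hu.tendsto_lim hbdd).sub
    (tendsto_const_div_atTop_nhds_zero_nat c)).congr fun n => ?_⟩
  ring

lemma tendsto_div_neg_log_of_nat {f : ℝ → ℝ} {L : ℕ → ℝ} {l C : ℝ}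
    (hL : Tendsto (fun n : ℕ => L n / n) atTop (𝓝 l))
    (hf : ∀ δ, 0 < δ → δ < 1 → |f δ - L ⌊-Real.log δ⌋₊| ≤ C) :
    Tendsto (fun δ => f δ / (-Real.log δ)) (𝓝[>] 0) (𝓝 l) := by
  have hT : Tendsto (fun δ => -Real.log δ) (𝓝[>] 0) atTop :=
    tendsto_neg_atBot_atTop.comp Real.tendsto_log_nhdsGT_zero
  have hN : Tendsto (fun δ => ⌊-Real.log δ⌋₊) (𝓝[>] 0) atTop := tendsto_nat_floor_atTop.comp hT
  have h1 : Tendsto (fun δ => (f δ - L ⌊-Real.log δ⌋₊) / (-Real.log δ)) (𝓝[>] 0) (𝓝 0) := by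
    refine squeeze_zero_norm' ?_ ((tendsto_const_nhds (x := C)).div_atTop hT)
    filter_upwards [Ioo_mem_nhdsGT zero_lt_one] with δ hδ
    have hpos : 0 < -Real.log δ := by linarith [Real.log_neg hδ.1 hδ.2]
    rw [Real.norm_eq_abs, abs_div, abs_of_pos hpos]
    gcongr
    exact hf δ hδ.1 hδ.2
  have h2 := h1.add ((hL.comp hN).mul ((tendsto_nat_floor_div_atTop (R := ℝ)).comp hT))
  rw [zero_add, mul_one] at h2
  refine h2.congr' ?_
  filter_upwards [hN.eventually_ge_atTop 1] with δ hδ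
  have hn : ((⌊-Real.log δ⌋₊ : ℕ) : ℝ) ≠ 0 := by positivity
  simp only [Function.comp]
  rw [div_mul_div_cancel₀ hn, ← add_div, sub_add_cancel]

lemma log_toReal_le {a b C : ℝ≥0∞} (h : a ≤ C * b) (ha : a ≠ 0) (hb : b ≠ ∞) (hC : C ≠ ∞) :
    Real.log a.toReal ≤ Real.log C.toReal + Real.log b.toReal := by
  have hCb : C * b ≠ 0 := fun h0 => ha (le_antisymm (h.trans_eq h0) zero_le)
  have hC0 := left_ne_zero_of_mul hCb
  have hb0 := right_ne_zero_of_mul hCb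
  have hCb' : C * b ≠ ∞ := ENNReal.mul_ne_top hC hb
  rw [← Real.log_mul (ENNReal.toReal_ne_zero.2 ⟨hC0, hC⟩) (ENNReal.toReal_ne_zero.2 ⟨hb0, hb⟩),
    ← ENNReal.toReal_mul]
  exact Real.log_le_log (ENNReal.toReal_pos ha (ne_top_of_le_ne_top hCb' h))
    (ENNReal.toReal_mono hCb' h)

namespace SelfSimilarFamily

variable {I K : Type} [Fintype K] (F : SelfSimilarFamily I K)

lemma exists_uniform_moment_le [Finite I] {q : ℝ} (hq : 0 ≤ q) (i : I)
    (hrec : ∀ j, F.Reach i j → F.Reach j i) :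
    ∃ C : ℝ≥0∞, C ≠ ∞ ∧ ∀ j, F.Reach i j → ∀ δ, 0 < δ →
      ballMoment (F.ν j) q δ ≤ C * ballMoment (F.ν i) q δ ∧
      ballMoment (F.ν i) q δ ≤ C * ballMoment (F.ν j) q δ := by
  cases nonempty_fintype I
  have h : ∀ j, ∃ C : ℝ≥0∞, C ≠ ∞ ∧ (F.Reach i j → ∀ δ, 0 < δ →
      ballMoment (F.ν j) q δ ≤ C * ballMoment (F.ν i) q δ ∧
      ballMoment (F.ν i) q δ ≤ C * ballMoment (F.ν j) q δ) := by
    intro j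
    by_cases hj : F.Reach i j
    · obtain ⟨C₁, hC₁, h₁⟩ := F.exists_moment_le_of_reach hq hj
      obtain ⟨C₂, hC₂, h₂⟩ := F.exists_moment_le_of_reach hq (hrec j hj)
      refine ⟨C₁ + C₂, ENNReal.add_ne_top.2 ⟨hC₁, hC₂⟩, fun _ δ hδ =>
        ⟨(h₁ δ hδ).trans ?_, (h₂ δ hδ).trans ?_⟩⟩
      · gcongr; exact le_self_add
      · gcongr; exact le_add_self
    · exact ⟨0, by simp, fun h => absurd h hj⟩
  choose C hC hle using h
  have hsum : ∀ j, C j ≤ ∑ j, C j := fun j =>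
    Finset.single_le_sum (fun _ _ => zero_le) (Finset.mem_univ j)
  refine ⟨∑ j, C j, ENNReal.sum_ne_top.2 fun j _ => hC j, fun j hj δ hδ =>
    ⟨(hle j hj δ hδ).1.trans ?_, (hle j hj δ hδ).2.trans ?_⟩⟩
  · gcongr; exact hsum j
  · gcongr; exact hsum j

/-- Quasi-submultiplicativity of the moments for `1 ≤ q`. -/
lemma exists_moment_mul_le [Finite I] {q : ℝ} (hq : 1 ≤ q) (i : I)
    (hrec : ∀ j, F.Reach i j → F.Reach j i) :
    ∃ C : ℝ≥0∞, C ≠ ∞ ∧ ∀ δ ε, 0 < δ → δ ≤ 1 → 0 < ε → ε ≤ 1 →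
      ballMoment (F.ν i) q (δ * ε) ≤ C * (ballMoment (F.ν i) q δ * ballMoment (F.ν i) q ε) := by
  have hq0 : 0 ≤ q := by linarith
  obtain ⟨R, -, hR⟩ := F.exists_support
  obtain ⟨ρ, hρ0, -, hcut⟩ := F.exists_cut
  obtain ⟨C₁, hC₁, h₁⟩ := F.exists_uniform_moment_le hq0 i hrec
  obtain ⟨C₂, hC₂, h₂⟩ := exists_ballMoment_mul_le (F.ν i) hq0 ρ⁻¹
  obtain ⟨C₃, hC₃, h₃⟩ := exists_ballMoment_mul_le (F.ν i) hq0 (2 * R + 2)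
  refine ⟨C₁ * C₂ * C₃, ENNReal.mul_ne_top (ENNReal.mul_ne_top hC₁ hC₂) hC₃,
    fun δ ε hδ0 hδ1 hε0 hε1 => ?_⟩
  obtain ⟨C⟩ := hcut ε hε0 hε1 i
  have h := C.moment_mul_le (by positivity) hq hR hρ0 hδ0.le hδ1
    (M := C₁ * (C₂ * ballMoment (F.ν i) q δ)) fun j hj =>
      (h₁ j hj _ (by positivity)).1.trans (by gcongr; exact h₂ δ hδ0)
  calc ballMoment (F.ν i) q (δ * ε) ≤ 2 * ballMoment (F.ν i) q (δ * ε) :=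
        le_mul_of_one_le_left zero_le one_le_two
    _ ≤ _ := h
    _ ≤ C₁ * (C₂ * ballMoment (F.ν i) q δ) * (C₃ * ballMoment (F.ν i) q ε) := by
        gcongr; exact h₃ ε hε0
    _ = _ := by ring

/-- Quasi-supermultiplicativity of the moments for `0 ≤ q ≤ 1`. -/
lemma exists_le_moment_mul [Finite I] {q : ℝ} (hq0 : 0 ≤ q) (hq : q ≤ 1) (i : I)
    (hrec : ∀ j, F.Reach i j → F.Reach j i) :
    ∃ C : ℝ≥0∞, C ≠ ∞ ∧ ∀ δ ε, 0 < δ → δ ≤ 1 → 0 < ε → ε ≤ 1 →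
      ballMoment (F.ν i) q δ * ballMoment (F.ν i) q ε ≤ C * ballMoment (F.ν i) q (δ * ε) := by
  obtain ⟨R, -, hR⟩ := F.exists_support
  obtain ⟨ρ, hρ0, -, hcut⟩ := F.exists_cut
  obtain ⟨C₁, hC₁, h₁⟩ := F.exists_uniform_moment_le hq0 i hrec
  have hρ' : ENNReal.ofReal ρ ≠ 0 := by simpa using hρ0
  have hC₁0 : C₁ ≠ 0 := by
    rintro rfl
    have := (h₁ i Relation.ReflTransGen.refl 1 one_pos).1
    rw [zero_mul, nonpos_iff_eq_zero] at this
    exact ballMoment_ne_zero _ hq0 (hR i) one_pos this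
  refine ⟨C₁ * (ENNReal.ofReal ρ)⁻¹ * ENNReal.ofReal (2 * (2 * R + 2)),
    ENNReal.mul_ne_top (ENNReal.mul_ne_top hC₁ (ENNReal.inv_ne_top.2 hρ')) ENNReal.ofReal_ne_top,
    fun δ ε hδ0 hδ1 hε0 hε1 => ?_⟩
  obtain ⟨C⟩ := hcut ε hε0 hε1 i
  have h := C.le_moment_mul (by positivity) hq0 hq hR hρ0 hδ0.le hδ1
    (m := C₁⁻¹ * ballMoment (F.ν i) q δ) fun j hj => by
      calc C₁⁻¹ * ballMoment (F.ν i) q δ ≤ C₁⁻¹ * (C₁ * ballMoment (F.ν j) q δ) := by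
            gcongr; exact (h₁ j hj δ hδ0).2
        _ = _ := by rw [← mul_assoc, ENNReal.inv_mul_cancel hC₁0 hC₁, one_mul]
  calc ballMoment (F.ν i) q δ * ballMoment (F.ν i) q ε
      = (C₁ * C₁⁻¹) * ((ENNReal.ofReal ρ)⁻¹ * ENNReal.ofReal ρ) *
          (ballMoment (F.ν i) q δ * ballMoment (F.ν i) q ε) := by
        rw [ENNReal.mul_inv_cancel hC₁0 hC₁, ENNReal.inv_mul_cancel hρ' ENNReal.ofReal_ne_top]
        simp
    _ = C₁ * (ENNReal.ofReal ρ)⁻¹ * (ENNReal.ofReal ρ * (C₁⁻¹ * ballMoment (F.ν i) q δ) *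
          ballMoment (F.ν i) q ε) := by ring
    _ ≤ C₁ * (ENNReal.ofReal ρ)⁻¹ * (ENNReal.ofReal (2 * (2 * R + 2)) *
          ballMoment (F.ν i) q (δ * ε)) := by gcongr
    _ = _ := by ring

/-- The exponential growth rate of the moments along the scales `exp (-n)` exists. -/
lemma exists_tendsto_log_moment [Finite I] {q : ℝ} (hq : 0 ≤ q) (i : I)
    (hrec : ∀ j, F.Reach i j → F.Reach j i) :
    ∃ l, Tendsto (fun n : ℕ => Real.log (ballMoment (F.ν i) q (Real.exp (-n))).toReal / n)
      atTop (𝓝 l) := by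
  obtain ⟨R, -, hR⟩ := F.exists_support
  have hne : ∀ δ, 0 < δ → ballMoment (F.ν i) q δ ≠ 0 := fun δ hδ =>
    ballMoment_ne_zero _ hq (hR i) hδ
  have hnt : ∀ δ, ballMoment (F.ν i) q δ ≠ ∞ := fun δ => ballMoment_ne_top _ hq (hR i) δ
  have hlogmul : ∀ m n : ℕ, Real.log (ballMoment (F.ν i) q (Real.exp (-m)) *
      ballMoment (F.ν i) q (Real.exp (-n))).toReal =
      Real.log (ballMoment (F.ν i) q (Real.exp (-m))).toReal +
      Real.log (ballMoment (F.ν i) q (Real.exp (-n))).toReal := fun m n => by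
    rw [ENNReal.toReal_mul, Real.log_mul (ENNReal.toReal_ne_zero.2 ⟨hne _ (Real.exp_pos _), hnt _⟩)
      (ENNReal.toReal_ne_zero.2 ⟨hne _ (Real.exp_pos _), hnt _⟩)]
  have hexp : ∀ m n : ℕ, Real.exp (-((m + n : ℕ) : ℝ)) = Real.exp (-m) * Real.exp (-n) :=
    fun m n => by rw [← Real.exp_add]; congr 1; push_cast; ring
  have hle1 : ∀ n : ℕ, Real.exp (-(n : ℝ)) ≤ 1 := fun n => Real.exp_le_one_iff.2 (by simp)
  rcases le_total 1 q with hq1 | hq1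
  · obtain ⟨C, hC, h⟩ := F.exists_moment_mul_le hq1 i hrec
    obtain ⟨D, hD, h'⟩ := exists_ballMoment_mul_le (F.ν i) hq (Real.exp 1)
    refine exists_tendsto_div_of_le_add (c := Real.log C.toReal)
      (A := Real.log (ballMoment (F.ν i) q 1).toReal) (B := Real.log D.toReal) ?_ ?_
    · intro m n
      rw [← hlogmul, hexp, add_comm]
      exact log_toReal_le (h _ _ (Real.exp_pos _) (hle1 m) (Real.exp_pos _) (hle1 n))
        (hne _ (by positivity)) (ENNReal.mul_ne_top (hnt _) (hnt _)) hC
    · intro n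
      induction n with
      | zero => simp
      | succ n ih =>
        have h2 := h' (Real.exp (-((n + 1 : ℕ) : ℝ))) (Real.exp_pos _)
        rw [← Real.exp_add, show (1 : ℝ) + -((n + 1 : ℕ) : ℝ) = -n by push_cast; ring] at h2
        have h3 := log_toReal_le h2 (hne _ (Real.exp_pos _)) (hnt _) hD
        push_cast at h3 ⊢
        linarith
  · obtain ⟨C, hC, h⟩ := F.exists_le_moment_mul hq hq1 i hrec
    suffices hs : ∃ l, Tendsto (fun n : ℕ =>
        -Real.log (ballMoment (F.ν i) q (Real.exp (-n))).toReal / n) atTop (𝓝 l) by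
      obtain ⟨l, hl⟩ := hs
      exact ⟨-l, hl.neg.congr fun n => by ring⟩
    refine exists_tendsto_div_of_le_add
      (L := fun n : ℕ => -Real.log (ballMoment (F.ν i) q (Real.exp (-n))).toReal)
      (c := Real.log C.toReal)
      (A := -Real.log (ballMoment (F.ν i) q 1).toReal) (B := 0) ?_ ?_
    · intro m n
      have h1 := log_toReal_le (h _ _ (Real.exp_pos _) (hle1 m) (Real.exp_pos _) (hle1 n))
        (mul_ne_zero (hne _ (Real.exp_pos _)) (hne _ (Real.exp_pos _))) (hnt _) hC
      rw [hlogmul, ← hexp] at h1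
      linarith
    · intro n
      have h1 := Real.log_le_log (ENNReal.toReal_pos (hne _ (Real.exp_pos _)) (hnt _))
        (ENNReal.toReal_mono (hnt 1) (ballMoment_mono (F.ν i) hq (hle1 n)))
      linarith

/-- The `L^q`-spectra exist and coincide on a recurrent class of the family. -/
theorem exists_hasLq1 [Finite I] {q : ℝ} (hq : 0 ≤ q) (i : I)
    (hrec : ∀ j, F.Reach i j → F.Reach j i) :
    ∃ s, ∀ j, F.Reach i j → HasLq1 (F.ν j) q s := by
  obtain ⟨l, hl⟩ := F.exists_tendsto_log_moment hq i hrec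
  refine ⟨l + 1, fun j hj => ?_⟩
  obtain ⟨R, -, hR⟩ := F.exists_support
  have hne : ∀ i δ, 0 < δ → ballMoment (F.ν i) q δ ≠ 0 := fun i δ hδ =>
    ballMoment_ne_zero _ hq (hR i) hδ
  have hnt : ∀ i δ, ballMoment (F.ν i) q δ ≠ ∞ := fun i δ => ballMoment_ne_top _ hq (hR i) δ
  obtain ⟨C₁, hC₁, h₁⟩ := F.exists_uniform_moment_le hq i hrec
  obtain ⟨C₂, hC₂, h₂⟩ := exists_ballMoment_mul_le (F.ν i) hq (Real.exp 1)
  set C₃ : ℝ≥0∞ := 2 ^ q * 2 ^ q * 3 with hC₃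
  have hC₃t : C₃ ≠ ∞ := by
    have : (2 : ℝ≥0∞) ^ q ≠ ∞ := ENNReal.rpow_ne_top_of_nonneg hq (by simp)
    exact ENNReal.mul_ne_top (ENNReal.mul_ne_top this this) (by simp)
  have hbound : ∀ δ, 0 < δ → δ < 1 →
      |(Real.log (Dq1 (F.ν j) δ q) + Real.log δ) -
        Real.log (ballMoment (F.ν i) q (Real.exp (-(⌊-Real.log δ⌋₊ : ℕ)))).toReal| ≤
      max (Real.log C₁.toReal)
        (Real.log (C₂ * C₁ * C₃).toReal) := by
    intro δ hδ0 hδ1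
    set n := ⌊-Real.log δ⌋₊ with hn
    set P := ENNReal.ofReal δ * meshMoment (F.ν j) q δ with hP
    have hPle : P ≤ ballMoment (F.ν j) q δ := meshMoment_le _ hq hδ0
    have hleP : ballMoment (F.ν j) q δ ≤ C₃ * P := ballMoment_le_meshMoment _ hq hδ0
    have hPt : P ≠ ∞ := ne_top_of_le_ne_top (hnt j δ) hPle
    have hP0 : P ≠ 0 := fun h0 => hne j δ hδ0 (le_antisymm (hleP.trans_eq (by simp [h0])) zero_le)
    have hlogP : Real.log (Dq1 (F.ν j) δ q) + Real.log δ = Real.log P.toReal := by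
      have hD := right_ne_zero_of_mul hP0
      have hD' : meshMoment (F.ν j) q δ ≠ ∞ := fun h => hPt (by
        rw [hP, h, ENNReal.mul_top (left_ne_zero_of_mul hP0)])
      rw [Dq1_eq_toReal_meshMoment _ hq, hP, ENNReal.toReal_mul, ENNReal.toReal_ofReal hδ0.le,
        Real.log_mul hδ0.ne' (ENNReal.toReal_ne_zero.2 ⟨hD, hD'⟩), add_comm]
    have hlog0 : 0 ≤ -Real.log δ := by linarith [Real.log_neg hδ0 hδ1]
    have hn1 : δ ≤ Real.exp (-n) := by
      rw [← Real.log_le_iff_le_exp hδ0]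
      linarith [Nat.floor_le hlog0]
    have hn2 : Real.exp (-n) ≤ Real.exp 1 * δ := by
      rw [← Real.exp_log hδ0, ← Real.exp_add]
      refine Real.exp_le_exp.2 ?_
      linarith [Nat.lt_floor_add_one (-Real.log δ)]
    have hup : P ≤ C₁ * ballMoment (F.ν i) q (Real.exp (-n)) :=
      hPle.trans (((h₁ j hj δ hδ0).1).trans (by gcongr; exact ballMoment_mono _ hq hn1))
    have hdown : ballMoment (F.ν i) q (Real.exp (-n)) ≤ C₂ * C₁ * C₃ * P :=
      calc _ ≤ ballMoment (F.ν i) q (Real.exp 1 * δ) := ballMoment_mono _ hq hn2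
        _ ≤ C₂ * ballMoment (F.ν i) q δ := h₂ δ hδ0
        _ ≤ C₂ * (C₁ * (C₃ * P)) := by
          gcongr
          exact ((h₁ j hj δ hδ0).2).trans (by gcongr)
        _ = _ := by ring
    have e1 := log_toReal_le hup hP0 (hnt _ _) hC₁
    have e2 := log_toReal_le hdown (hne i _ (Real.exp_pos _)) hPt
      (ENNReal.mul_ne_top (ENNReal.mul_ne_top hC₂ hC₁) hC₃t)
    rw [hlogP, abs_le]
    constructor
    · linarith [le_max_right (Real.log C₁.toReal) (Real.log (C₂ * C₁ * C₃).toReal)]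
    · linarith [le_max_left (Real.log C₁.toReal) (Real.log (C₂ * C₁ * C₃).toReal)]
  refine ((tendsto_div_neg_log_of_nat hl hbound).add_const 1).congr' ?_
  filter_upwards [Ioo_mem_nhdsGT zero_lt_one] with δ hδ
  have hpos := Real.log_neg hδ.1 hδ.2
  have hpos' : Real.log δ ≠ 0 := hpos.ne
  field_simp
  ring

end SelfSimilarFamily

/-! ### The coordinate projections of a box-like family -/

namespace BoxLikeGIFS

variable {V E : Type} (S : BoxLikeGIFS V E)

lemma measurable_map (e : E) : Measurable (S.map e) := by
  unfold BoxLikeGIFS.map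
  split_ifs <;> fun_prop

/-- The coordinate picked out by an index: `false` for the first, `true` for the second. -/
def coord (c : Bool) (z : ℝ × ℝ) : ℝ := if c then z.2 else z.1

lemma measurable_coord (c : Bool) : Measurable (coord c) := by
  cases c
  · exact measurable_fst
  · exact measurable_snd

lemma projMeas_eq_map (μ : V → Measure (ℝ × ℝ)) (v : V) (c : Bool) :
    projMeas μ (v, c) = (μ v).map (coord c) := by
  cases c <;> rfl

/-- The coordinate of the source which determines the coordinate `c` of the image under `S.map e`. -/
def turn (e : E) (c : Bool) : Bool := if S.diag e then c else !c

lemma coord_map (e : E) (c : Bool) (z : ℝ × ℝ) :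
    coord c (S.map e z) =
      (if c then S.sb e * S.b e else S.sa e * S.a e) * coord (S.turn e c) z +
        coord c (S.trans e) := by
  cases c <;> cases h : S.diag e <;> simp [coord, turn, BoxLikeGIFS.map, h]

variable [Fintype E] {p : E → ℝ} {μ : V → Measure (ℝ × ℝ)}

/-- The coordinate projections form a graph-directed self-similar family on the line. -/
noncomputable def lineFamily (hp : S.IsWeights p) (hμ : S.IsGDMeasure p μ) :
    SelfSimilarFamily (V × Bool) (E × Bool) where
  ν := projMeas μ
  isProb := fun ⟨v, c⟩ => by
    have := hμ.1 v
    rw [projMeas_eq_map]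
    exact Measure.isProbabilityMeasure_map (measurable_coord c).aemeasurable
  src k := (S.init k.1, k.2)
  tgt k := (S.term k.1, S.turn k.1 k.2)
  w k := ENNReal.ofReal (p k.1)
  w_ne_zero k := by simpa using hp.1 k.1
  σ k := if k.2 then S.sb k.1 * S.b k.1 else S.sa k.1 * S.a k.1
  t k := coord k.2 (S.trans k.1)
  abs_σ_pos := fun ⟨e, c⟩ => by
    have ha := (S.a_mem e).1
    have hb := (S.b_mem e).1
    cases c <;> rcases S.sa_mem e with h | h <;> rcases S.sb_mem e with h' | h' <;>
      simp [h, h', ha.ne', hb.ne']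
  abs_σ_lt_one := fun ⟨e, c⟩ => by
    have ha := S.a_mem e
    have hb := S.b_mem e
    cases c <;> rcases S.sa_mem e with h | h <;> rcases S.sb_mem e with h' | h' <;>
      simp [h, h', abs_of_pos ha.1, abs_of_pos hb.1, ha.2, hb.2]
  apply_eq := fun ⟨v, c⟩ B hB => by
    have hterm : ∀ e, (μ (S.term e)).map (S.map e) (coord c ⁻¹' B) =
        projMeas μ (S.term e, S.turn e c) ((fun y =>
          (if c then S.sb e * S.b e else S.sa e * S.a e) * y + coord c (S.trans e)) ⁻¹' B) := by
      intro e
      have hm : Measurable fun y : ℝ =>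
          (if c then S.sb e * S.b e else S.sa e * S.a e) * y + coord c (S.trans e) := by fun_prop
      rw [projMeas_eq_map, Measure.map_apply (S.measurable_map e) (measurable_coord c hB),
        Measure.map_apply (measurable_coord _) (hm hB)]
      congr 1
      ext z
      simp only [mem_preimage, coord_map]
    rw [projMeas_eq_map, Measure.map_apply (measurable_coord c) hB, hμ.2 v,
      Measure.finsetSum_apply, Fintype.sum_prod_type]
    refine Finset.sum_congr rfl fun e _ => ?_
    rw [Finset.sum_eq_single c (fun d _ hd => by simp [hd]) (by simp)]
    by_cases he : S.init e = v
    · simp [he, hterm]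
    · simp [he]

variable (hp : S.IsWeights p) (hμ : S.IsGDMeasure p μ)

lemma lineFamily_reach_flip {v v' : V} {c c' : Bool}
    (h : (S.lineFamily hp hμ).Reach (v, c) (v', c')) :
    (S.lineFamily hp hμ).Reach (v, !c) (v', !c') := by
  refine Relation.ReflTransGen.lift (fun i : V × Bool => (i.1, !i.2)) ?_ _ _ h
  rintro _ _ ⟨⟨e, d⟩, rfl, rfl⟩
  refine ⟨(e, !d), rfl, ?_⟩
  simp only [lineFamily, turn]
  split_ifs <;> rfl

lemma exists_lineFamily_reach (hSC : S.StronglyConnected) (v v' : V) (c : Bool) :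
    ∃ c', (S.lineFamily hp hμ).Reach (v, c) (v', c') := by
  induction hSC v v' with
  | single h =>
    obtain ⟨e, rfl, rfl⟩ := h
    exact ⟨S.turn e c, .single ⟨(e, c), rfl, rfl⟩⟩
  | tail _ h ih =>
    obtain ⟨d, hd⟩ := ih
    obtain ⟨e, rfl, rfl⟩ := h
    exact ⟨S.turn e d, hd.tail ⟨(e, d), rfl, rfl⟩⟩

lemma lineFamily_reach_symm (hSC : S.StronglyConnected) {i j : V × Bool}
    (h : (S.lineFamily hp hμ).Reach i j) : (S.lineFamily hp hμ).Reach j i := by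
  obtain ⟨v, c⟩ := i
  obtain ⟨v', c'⟩ := j
  obtain ⟨d, hd⟩ := S.exists_lineFamily_reach hp hμ hSC v' v c'
  rcases Bool.eq_or_eq_not d c with rfl | rfl
  · exact hd
  · have h' := S.lineFamily_reach_flip hp hμ (h.trans hd)
    rw [Bool.not_not] at h'
    exact hd.trans h'

lemma lineFamily_reach_snd (hdiag : ∀ e, S.diag e = true) {i j : V × Bool}
    (h : (S.lineFamily hp hμ).Reach i j) : j.2 = i.2 := by
  induction h with
  | refl => rfl
  | tail _ h ih =>
    obtain ⟨⟨e, d⟩, rfl, rfl⟩ := h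
    rw [← ih]
    simp [lineFamily, turn, hdiag e]

/-- A choice of one coordinate at each vertex, all mutually reachable, splits the projections. -/
lemma goodPartition_of_reach [Fintype V] (hSC : S.StronglyConnected) (v₀ : V) (f : V → Bool)
    (hf : ∀ v, (S.lineFamily hp hμ).Reach (v₀, f v₀) (v, f v)) :
    GoodPartition μ (Finset.univ.image fun v => (v, f v))
      (Finset.univ.image fun v => (v, !f v)) := by
  have key : ∀ g : V → Bool, (∀ v, (S.lineFamily hp hμ).Reach (v₀, g v₀) (v, g v)) →
      ∃ τ : ℝ → ℝ, ∀ q, 0 ≤ q → ∀ v, HasLq1 (projMeas μ (v, g v)) q (τ q) := by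
    intro g hg
    have h : ∀ q : ℝ, ∃ s, 0 ≤ q → ∀ v, HasLq1 (projMeas μ (v, g v)) q s := by
      intro q
      by_cases hq : 0 ≤ q
      · obtain ⟨s, hs⟩ := (S.lineFamily hp hμ).exists_hasLq1 hq (v₀, g v₀)
          fun j hj => S.lineFamily_reach_symm hp hμ hSC hj
        exact ⟨s, fun _ v => hs _ (hg v)⟩
      · exact ⟨0, fun h => absurd h hq⟩
    choose τ hτ using h
    exact ⟨τ, hτ⟩
  have hcard : ∀ g : V → Bool,
      (Finset.univ.image fun v => (v, g v)).card = Fintype.card V := fun g =>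
    Finset.card_image_of_injective _ fun v v' h => congrArg Prod.fst h
  obtain ⟨τA, hA⟩ := key f hf
  obtain ⟨τB, hB⟩ := key (fun v => !f v) fun v => S.lineFamily_reach_flip hp hμ (hf v)
  refine ⟨?_, ?_, hcard f, hcard fun v => !f v, τA, τB, ?_, ?_, ?_⟩
  · rw [Finset.disjoint_left]
    rintro ⟨v, c⟩ h h'
    simp_all
  · ext ⟨v, c⟩
    cases c <;> cases hv : f v <;> simp [hv]
  · intro q hq i hi
    obtain ⟨v, -, rfl⟩ := Finset.mem_image.1 hi
    exact hA q hq v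
  · intro q hq i hi
    obtain ⟨v, -, rfl⟩ := Finset.mem_image.1 hi
    exact hB q hq v
  · intro v
    cases hv : f v <;> simp [hv]

end BoxLikeGIFS

end LqGIFS

/-- splitting of projections.  For a strongly connected planar box-like
self-affine GIFS with weights `p` and graph-directed measure family `μ`, the `L^q`-spectra
of all coordinate projections `μ_v^x, μ_v^y` exist for `q ≥ 0`; the projection family can
be split into two disjoint families `A`, `B` of cardinality `#V` with common spectra,
splitting `{μ_v^x, μ_v^y}` at every vertex; and if every `T_e` is diagonal one may take
`A = {μ_v^x}_v`, `B = {μ_v^y}_v`. -/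
theorem statement0
    {V E : Type} [Fintype V] [Fintype E] [Nonempty V]
    (S : BoxLikeGIFS V E)
    (hSC : S.StronglyConnected)
    (p : E → ℝ) (hp : S.IsWeights p)
    (μ : V → Measure (ℝ × ℝ)) (hμ : S.IsGDMeasure p μ) :
    (∀ q : ℝ, 0 ≤ q → ∀ v : V,
        (∃ s : ℝ, HasLq1 ((μ v).map Prod.fst) q s) ∧
        (∃ s : ℝ, HasLq1 ((μ v).map Prod.snd) q s)) ∧
    (∃ A B : Finset (V × Bool), GoodPartition μ A B) ∧
    ((∀ e : E, S.diag e = true) →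
      GoodPartition μ (Finset.univ.image fun v : V => ((v, false) : V × Bool))
        (Finset.univ.image fun v : V => ((v, true) : V × Bool))) := by
  have hlq : ∀ q : ℝ, 0 ≤ q → ∀ i, ∃ s, HasLq1 (projMeas μ i) q s := fun q hq i => by
    obtain ⟨s, hs⟩ := (S.lineFamily hp hμ).exists_hasLq1 hq i
      fun j hj => S.lineFamily_reach_symm hp hμ hSC hj
    exact ⟨s, hs i .refl⟩
  obtain ⟨v₀⟩ := ‹Nonempty V›
  refine ⟨fun q hq v => ⟨hlq q hq (v, false), hlq q hq (v, true)⟩, ?_, fun hdiag => ?_⟩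
  · choose f hf using fun v => S.exists_lineFamily_reach hp hμ hSC v₀ v false
    refine ⟨_, _, S.goodPartition_of_reach hp hμ hSC v₀ f fun v => ?_⟩
    exact (S.lineFamily_reach_symm hp hμ hSC (hf v₀)).trans (hf v)
  · refine S.goodPartition_of_reach hp hμ hSC v₀ (fun _ => false) fun v => ?_
    obtain ⟨c, hc⟩ := S.exists_lineFamily_reach hp hμ hSC v₀ v false
    obtain rfl : c = false := S.lineFamily_reach_snd hp hμ hdiag hc
    exact hc
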